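/- arXiv:1709.01352 — 2 statements merged into one kernel-verified Lean document; each statement's English description precedes it below -/
import Mathlib

section
/- Let q, a₁ be integers with q ≥ 2 and a₁² ≤ 4q such that the pair (q, a₁) is ordinary (i.e., β is not a root of unity). Then the set of positive integers n with −aₙ = ⌊2·q^{n/2}⌋ is finite. -/
/-!
Put `γ = α / conj α`. If `-aₙ = ⌊2 q ^ (n / 2)⌋` then `α ^ n` lies so close to the negative real
axis that `‖γ ^ n - 1‖` is at most of order `q ^ (-n / 4)`. This contradicts, for large `n`, the
bound `exp (-C log³ n) < ‖γ ^ n - 1‖`, which is proved by the Gelfond method.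

If `γ ^ n` is very close to `1`, then `γ` is very close to some root of unity `exp (2πik / n)`,
whose powers are interpolated by the function `exp (2πiz / n)` of exponential type only `2π / n`.
Siegel's lemma provides a nonzero integer polynomial `p` of moderate height vanishing at the points
`(k s + n t, γ ^ s)` for `s, t < S`, so that the entire function `p (z, exp (2πiz / n))` is tiny at
`z = k s + n t`. By the Schwarz lemma it stays tiny at such points on a larger grid, and since
`p (k s + n t, γ ^ s)` is, up to a power of `conj α`, an element of the discrete ring `ℤ[α]`, it
vanishes there exactly. After two extrapolations `p` has more zeros than its degrees allow.
-/

open Complex Metric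
open scoped ComplexConjugate

section Schwarz

variable {E : Type*} [NormedAddCommGroup E] [NormedSpace ℂ E]

lemma exists_eq_prod_sub_smul [CompleteSpace E] {f : ℂ → E} {U : Set ℂ} (hU : IsOpen U)
    (hf : DiffContOnCl ℂ f U) {W : Finset ℂ} (hW : ↑W ⊆ U) (hzero : ∀ w ∈ W, f w = 0) :
    ∃ g : ℂ → E, DiffContOnCl ℂ g U ∧ ∀ z, f z = (∏ w ∈ W, (z - w)) • g z := by
  induction W using Finset.induction_on with
  | empty => exact ⟨f, hf, by simp⟩
  | insert a W ha ih =>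
    rw [Finset.coe_insert, Set.insert_subset_iff] at hW
    obtain ⟨g, hg, hfg⟩ := ih hW.2 fun w hw ↦ hzero w (Finset.mem_insert_of_mem hw)
    have hprod : ∏ w ∈ W, (a - w) ≠ 0 :=
      Finset.prod_ne_zero_iff.mpr fun w hw ↦ sub_ne_zero.mpr (ne_of_mem_of_not_mem hw ha).symm
    have hga : g a = 0 := by
      have := hfg a
      rw [hzero a (Finset.mem_insert_self a W)] at this
      exact (smul_eq_zero.mp this.symm).resolve_left hprod
    have hUa : U ∈ nhds a := hU.mem_nhds hW.1
    refine ⟨dslope g a, ⟨(differentiableOn_dslope hUa).mpr hg.differentiableOn, ?_⟩, fun z ↦ ?_⟩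
    · exact (continuousOn_dslope (Filter.mem_of_superset hUa subset_closure)).mpr
        ⟨hg.continuousOn, hg.differentiableOn.differentiableAt hUa⟩
    · rw [hfg z, Finset.prod_insert ha, mul_comm, mul_smul, sub_smul_dslope, hga, sub_zero]

lemma norm_le_mul_pow_of_forall_eq_zero [CompleteSpace E] {f : ℂ → E} {ρ R M : ℝ}
    (hρR : ρ < R) (hf : DiffContOnCl ℂ f (ball 0 R)) (hM : ∀ z ∈ sphere 0 R, ‖f z‖ ≤ M)
    {W : Finset ℂ} (hW : ↑W ⊆ closedBall (0 : ℂ) ρ) (hzero : ∀ w ∈ W, f w = 0)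
    {x : ℂ} (hx : x ∈ closedBall 0 ρ) :
    ‖f x‖ ≤ M * (2 * ρ / (R - ρ)) ^ W.card := by
  obtain ⟨g, hg, hfg⟩ :=
    exists_eq_prod_sub_smul isOpen_ball hf (hW.trans (closedBall_subset_ball hρR)) hzero
  have hsub : 0 < R - ρ := sub_pos.mpr hρR
  have hnorm (z : ℂ) : ‖f z‖ = (∏ w ∈ W, ‖z - w‖) * ‖g z‖ := by
    rw [hfg z, norm_smul, norm_prod]
  have hWρ : ∀ w ∈ W, ‖w‖ ≤ ρ := fun w hw ↦ mem_closedBall_zero_iff.mp (hW hw)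
  have hgx : ‖g x‖ ≤ M / (R - ρ) ^ W.card := by
    refine norm_le_of_forall_mem_frontier_norm_le isBounded_ball hg (fun z hz ↦ ?_)
      (subset_closure (closedBall_subset_ball hρR hx))
    have hzR := frontier_ball_subset_sphere hz
    rw [le_div_iff₀ (by positivity)]
    calc ‖g z‖ * (R - ρ) ^ W.card ≤ ‖g z‖ * ∏ w ∈ W, ‖z - w‖ := by
          gcongr
          rw [← Finset.prod_const]
          refine Finset.prod_le_prod (fun _ _ ↦ hsub.le) fun w hw ↦ ?_
          linarith [norm_sub_norm_le z w, hWρ w hw, mem_sphere_zero_iff_norm.mp hzR]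
      _ = ‖f z‖ := by rw [hnorm, mul_comm]
      _ ≤ M := hM z hzR
  have hprod : ∏ w ∈ W, ‖x - w‖ ≤ (2 * ρ) ^ W.card := by
    rw [← Finset.prod_const]
    refine Finset.prod_le_prod (fun _ _ ↦ norm_nonneg _) fun w hw ↦ ?_
    linarith [norm_sub_le x w, hWρ w hw, mem_closedBall_zero_iff.mp hx]
  calc ‖f x‖ = (∏ w ∈ W, ‖x - w‖) * ‖g x‖ := hnorm x
    _ ≤ (2 * ρ) ^ W.card * (M / (R - ρ) ^ W.card) := by
      have hρ : 0 ≤ ρ := (norm_nonneg x).trans (mem_closedBall_zero_iff.mp hx)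
      gcongr
    _ = M * (2 * ρ / (R - ρ)) ^ W.card := by rw [div_pow]; ring

lemma norm_eval_interpolate_le {W : Finset ℂ} {r : ℂ → ℂ} {η D : ℝ} {z : ℂ} (hD : 1 ≤ D)
    (hsep : (W : Set ℂ).Pairwise fun v w ↦ 1 ≤ ‖v - w‖) (hr : ∀ w ∈ W, ‖r w‖ ≤ η)
    (hz : ∀ w ∈ W, ‖z - w‖ ≤ D) :
    ‖(Lagrange.interpolate W id r).eval z‖ ≤ W.card * (η * D ^ W.card) := by
  rw [Lagrange.interpolate_apply, Polynomial.eval_finsetSum, ← nsmul_eq_mul]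
  refine norm_sum_le_of_le _ (fun w hw ↦ ?_) |>.trans_eq (Finset.sum_const _)
  rw [Polynomial.eval_mul, Polynomial.eval_C, norm_mul]
  have hη : 0 ≤ η := (norm_nonneg _).trans (hr w hw)
  gcongr
  · exact hr w hw
  rw [Lagrange.basis, Polynomial.eval_prod, norm_prod]
  calc ∏ v ∈ W.erase w, ‖(Lagrange.basisDivisor w v).eval z‖ ≤ D ^ (W.erase w).card := by
        rw [← Finset.prod_const]
        refine Finset.prod_le_prod (fun _ _ ↦ norm_nonneg _) fun v hv ↦ ?_
        obtain ⟨hvw, hvW⟩ := Finset.mem_erase.mp hv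
        simp only [Lagrange.basisDivisor, Polynomial.eval_mul, Polynomial.eval_C,
          Polynomial.eval_sub, Polynomial.eval_X, norm_mul, norm_inv]
        exact (mul_le_of_le_one_left (norm_nonneg _)
          (inv_le_one_of_one_le₀ (hsep hw hvW hvw.symm))).trans (hz v hvW)
    _ ≤ D ^ W.card := pow_le_pow_right₀ hD (Finset.card_le_card (Finset.erase_subset _ _))

lemma norm_le_of_forall_norm_le_of_separated {f : ℂ → ℂ} {ρ M η : ℝ} (hρ : 1 ≤ ρ)
    (hf : DiffContOnCl ℂ f (ball 0 (9 * ρ))) (hM : ∀ z ∈ sphere 0 (9 * ρ), ‖f z‖ ≤ M)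
    {W : Finset ℂ} (hW : ↑W ⊆ closedBall (0 : ℂ) ρ)
    (hsep : (W : Set ℂ).Pairwise fun v w ↦ 1 ≤ ‖v - w‖) (hη : ∀ w ∈ W, ‖f w‖ ≤ η)
    {x : ℂ} (hx : x ∈ closedBall 0 ρ) :
    ‖f x‖ ≤ M * (1 / 4) ^ W.card + 2 * (W.card * (η * (10 * ρ) ^ W.card)) := by
  set L := Lagrange.interpolate W id f
  set B := W.card * (η * (10 * ρ) ^ W.card)
  have hL {z : ℂ} (hz : ‖z‖ ≤ 9 * ρ) : ‖L.eval z‖ ≤ B :=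
    norm_eval_interpolate_le (by linarith) hsep hη fun w hw ↦ by
      linarith [norm_sub_le z w, mem_closedBall_zero_iff.mp (hW hw)]
  have hxρ : ‖x‖ ≤ ρ := mem_closedBall_zero_iff.mp hx
  have hLx : ‖L.eval x‖ ≤ B := hL (by linarith)
  have hdiff : ‖f x - L.eval x‖ ≤ (M + B) * (1 / 4) ^ W.card := by
    have hratio : 2 * ρ / (9 * ρ - ρ) = 1 / 4 := by field_simp; norm_num
    rw [← hratio]
    refine norm_le_mul_pow_of_forall_eq_zero (f := fun z ↦ f z - L.eval z) (by linarith)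
      (hf.sub L.differentiable.diffContOnCl) (fun z hz ↦ ?_) hW (fun w hw ↦ ?_) hx
    · exact (norm_sub_le _ _).trans
        (add_le_add (hM z hz) (hL (mem_sphere_zero_iff_norm.mp hz).le))
    · exact sub_eq_zero.mpr
        (Lagrange.eval_interpolate_at_node f Function.injective_id.injOn hw).symm
  have hquarter : B * (1 / 4) ^ W.card ≤ B :=
    mul_le_of_le_one_right ((norm_nonneg _).trans hLx) (pow_le_one₀ (by norm_num) (by norm_num))
  calc ‖f x‖ ≤ ‖f x - L.eval x‖ + ‖L.eval x‖ := norm_le_norm_sub_add _ _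
    _ ≤ (M + B) * (1 / 4) ^ W.card + B := add_le_add hdiff hLx
    _ ≤ M * (1 / 4) ^ W.card + 2 * B := by linarith

lemma norm_le_of_forall_norm_le_of_natCast {f : ℂ → ℂ} {ρ M η : ℝ} (hρ : 1 ≤ ρ)
    (hf : DiffContOnCl ℂ f (ball 0 (9 * ρ))) (hM : ∀ z ∈ sphere 0 (9 * ρ), ‖f z‖ ≤ M)
    {W : Finset ℕ} (hW : ∀ w ∈ W, (w : ℝ) ≤ ρ) (hη : ∀ w ∈ W, ‖f w‖ ≤ η)
    {x : ℂ} (hx : x ∈ closedBall 0 ρ) :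
    ‖f x‖ ≤ M * (1 / 4) ^ W.card + 2 * (W.card * (η * (10 * ρ) ^ W.card)) := by
  rw [← Finset.card_map (Nat.castEmbedding (R := ℂ))]
  refine norm_le_of_forall_norm_le_of_separated hρ hf hM ?_ ?_ ?_ hx
  · simpa [Set.subset_def] using hW
  · simp only [Finset.coe_map, Set.Pairwise, Set.forall_mem_image]
    intro v _ w _ hvw
    have hvw' : (v : ℤ) ≠ w := fun h ↦ hvw (congrArg Nat.cast (Int.natCast_inj.mp h))
    have hdist : 1 ≤ dist (v : ℤ) w := Int.pairwise_one_le_dist hvw'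
    rw [← isometry_intCast.dist_eq, dist_eq_norm] at hdist
    simpa using hdist
  · simpa using hη

end Schwarz

lemma norm_pow_sub_pow_le {R : Type*} [NormedCommRing R] [NormOneClass R] {x y : R}
    (hx : ‖x‖ ≤ 1) (hy : ‖y‖ ≤ 1) (m : ℕ) : ‖x ^ m - y ^ m‖ ≤ m * ‖x - y‖ := by
  induction m with
  | zero => simp
  | succ m ih =>
    have hxm : ‖x ^ m‖ ≤ 1 := (norm_pow_le x m).trans (pow_le_one₀ (norm_nonneg x) hx)
    calc ‖x ^ (m + 1) - y ^ (m + 1)‖ = ‖x ^ m * (x - y) + (x ^ m - y ^ m) * y‖ := by ring_nf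
      _ ≤ ‖x ^ m‖ * ‖x - y‖ + ‖x ^ m - y ^ m‖ * ‖y‖ :=
        (norm_add_le _ _).trans (add_le_add (norm_mul_le _ _) (norm_mul_le _ _))
      _ ≤ 1 * ‖x - y‖ + m * ‖x - y‖ * 1 := by gcongr
      _ = (m + 1 : ℕ) * ‖x - y‖ := by push_cast; ring

lemma pow_injective_of_not_isOfFinOrder {M : Type*} [MonoidWithZero M] [IsLeftCancelMulZero M]
    {x : M} (hx0 : x ≠ 0) (hx : ¬IsOfFinOrder x) : Function.Injective (x ^ · : ℕ → M) := by
  refine Function.Injective.of_lt_imp_ne fun m n hmn h ↦ hx ?_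
  obtain ⟨d, rfl⟩ := Nat.exists_eq_add_of_lt hmn
  refine isOfFinOrder_iff_pow_eq_one.mpr ⟨d + 1, d.succ_pos, ?_⟩
  have : x ^ m * x ^ (d + 1) = x ^ m * 1 := by rw [← pow_add, ← add_assoc, mul_one]; exact h.symm
  exact mul_left_cancel₀ (pow_ne_zero m hx0) this

/-- The value at `(x, y)` of the bivariate integer polynomial with coefficients `p (i, j)`,
`i < I` being the exponent of `x` and `j < J` that of `y`. -/
def bieval {R : Type*} [CommRing R] {I J : ℕ} (p : Fin I × Fin J → ℤ) (x y : R) : R :=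
  ∑ ij, (p ij : R) * x ^ (ij.1 : ℕ) * y ^ (ij.2 : ℕ)

section Bieval

variable {I J : ℕ} {p : Fin I × Fin J → ℤ}

lemma eq_zero_of_forall_bieval_eq_zero {R : Type*} [CommRing R] [IsDomain R] [CharZero R]
    {x : Fin J → Fin I → R} {y : Fin J → R} (hx : ∀ s, Function.Injective (x s))
    (hy : Function.Injective y) (h : ∀ s t, bieval p (x s t) (y s) = 0) : p = 0 := by
  have hrow (s : Fin J) : (fun i ↦ ∑ j, (p (i, j) : R) * y s ^ (j : ℕ)) = 0 := by
    refine Matrix.eq_zero_of_forall_index_sum_mul_pow_eq_zero (hx s) fun t ↦ ?_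
    rw [← h s t, bieval, Fintype.sum_prod_type]
    refine Finset.sum_congr rfl fun i _ ↦ ?_
    rw [Finset.sum_mul]
    exact Finset.sum_congr rfl fun j _ ↦ by ring
  funext ⟨i, j⟩
  have hcol : (fun j ↦ (p (i, j) : R)) = 0 :=
    Matrix.eq_zero_of_forall_index_sum_mul_pow_eq_zero hy fun s ↦ congrFun (hrow s) i
  simpa using congrFun hcol j

lemma norm_bieval_le {P X Y : ℝ} {x y : ℂ} (hp : ∀ ij, |(p ij : ℝ)| ≤ P)
    (hX : 1 ≤ X) (hx : ‖x‖ ≤ X) (hY : 1 ≤ Y) (hy : ‖y‖ ≤ Y) :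
    ‖bieval p x y‖ ≤ I * J * (P * X ^ I * Y ^ J) := by
  have hterm (ij : Fin I × Fin J) :
      ‖(p ij : ℂ) * x ^ (ij.1 : ℕ) * y ^ (ij.2 : ℕ)‖ ≤ P * X ^ I * Y ^ J := by
    have hxI : ‖x‖ ^ (ij.1 : ℕ) ≤ X ^ I :=
      (pow_le_pow_left₀ (norm_nonneg x) hx _).trans (pow_le_pow_right₀ hX ij.1.2.le)
    have hyJ : ‖y‖ ^ (ij.2 : ℕ) ≤ Y ^ J :=
      (pow_le_pow_left₀ (norm_nonneg y) hy _).trans (pow_le_pow_right₀ hY ij.2.2.le)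
    have hpij := hp ij
    have hP : 0 ≤ P := (abs_nonneg _).trans hpij
    rw [norm_mul, norm_mul, norm_pow, norm_pow, norm_intCast]
    gcongr
  rw [bieval]
  simpa using norm_sum_le_of_le Finset.univ fun ij _ ↦ hterm ij

lemma norm_bieval_sub_bieval_le {P X : ℝ} {x y y' : ℂ} (hp : ∀ ij, |(p ij : ℝ)| ≤ P)
    (hX : 1 ≤ X) (hx : ‖x‖ ≤ X) (hy : ‖y‖ ≤ 1) (hy' : ‖y'‖ ≤ 1) :
    ‖bieval p x y - bieval p x y'‖ ≤ I * J * (P * X ^ I * (J * ‖y - y'‖)) := by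
  have hterm (ij : Fin I × Fin J) :
      ‖(p ij : ℂ) * x ^ (ij.1 : ℕ) * y ^ (ij.2 : ℕ) -
          (p ij : ℂ) * x ^ (ij.1 : ℕ) * y' ^ (ij.2 : ℕ)‖ ≤ P * X ^ I * (J * ‖y - y'‖) := by
    have hxI : ‖x‖ ^ (ij.1 : ℕ) ≤ X ^ I :=
      (pow_le_pow_left₀ (norm_nonneg x) hx _).trans (pow_le_pow_right₀ hX ij.1.2.le)
    have hyJ : ‖y ^ (ij.2 : ℕ) - y' ^ (ij.2 : ℕ)‖ ≤ J * ‖y - y'‖ :=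
      (norm_pow_sub_pow_le hy hy' _).trans (by gcongr; exact ij.2.2.le)
    have hpij := hp ij
    have hP : 0 ≤ P := (abs_nonneg _).trans hpij
    rw [← mul_sub, norm_mul, norm_mul, norm_pow, norm_intCast]
    gcongr
  rw [bieval, bieval, ← Finset.sum_sub_distrib]
  simpa using norm_sum_le_of_le Finset.univ fun ij _ ↦ hterm ij

end Bieval

open scoped Matrix.Norms.Elementwise in
lemma exists_ne_zero_mulVec_eq_zero_of_card {m n : Type*} [Fintype m] [Fintype n]
    [Nonempty m] (A B : Matrix m n ℤ) {T : ℝ} (hT : 1 ≤ T)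
    (hA : ∀ i j, |(A i j : ℝ)| ≤ T) (hB : ∀ i j, |(B i j : ℝ)| ≤ T)
    (hcard : Fintype.card n = 4 * Fintype.card m) :
    ∃ p : n → ℤ, p ≠ 0 ∧ A.mulVec p = 0 ∧ B.mulVec p = 0 ∧
      ∀ j, |(p j : ℝ)| ≤ Fintype.card n * T := by
  classical
  have hm : 0 < Fintype.card m := Fintype.card_pos
  obtain ⟨p, hp0, hker, hpnorm⟩ := Int.Matrix.exists_ne_zero_int_vec_norm_le (A.fromRows B)
    (by rw [Fintype.card_sum]; omega) (by rw [Fintype.card_sum]; omega)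
  have hexp : ((Fintype.card (m ⊕ m) : ℕ) : ℝ) /
      ((Fintype.card n : ℕ) - (Fintype.card (m ⊕ m) : ℕ) : ℝ) = 1 := by
    rw [Fintype.card_sum, hcard]
    push_cast
    field_simp
    norm_num
  have hAB : ‖A.fromRows B‖ ≤ T := by
    rw [Matrix.norm_le_iff (by linarith)]
    rintro (i | i) j
    · simpa [Int.norm_eq_abs] using hA i j
    · simpa [Int.norm_eq_abs] using hB i j
  rw [hexp, Real.rpow_one] at hpnorm
  rw [Matrix.fromRows_mulVec] at hker
  refine ⟨p, hp0, funext fun i ↦ congrFun hker (.inl i), funext fun i ↦ congrFun hker (.inr i),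
    fun j ↦ ?_⟩
  calc |(p j : ℝ)| ≤ ‖p‖ := norm_le_pi_norm p j
    _ ≤ Fintype.card n * max 1 ‖A.fromRows B‖ := hpnorm
    _ ≤ Fintype.card n * T := by gcongr; exact max_le hT hAB

lemma norm_div_conj {z : ℂ} (hz : z ≠ 0) : ‖z / conj z‖ = 1 := by
  rw [norm_div, RCLike.norm_conj, div_self (norm_ne_zero_iff.mpr hz)]

lemma div_conj_eq_div_norm_sq {z : ℂ} (hz : z ≠ 0) : z / conj z = (z / ‖z‖) ^ 2 := by
  have hconj : conj z ≠ 0 := (map_ne_zero _).mpr hz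
  rw [div_pow, ← mul_conj']
  field_simp

section QuadraticIntegers

variable {α : ℂ} {a q : ℤ}

lemma exists_eq_add_mul_of_mem_adjoin (htr : α + conj α = a) (hnm : α * conj α = q) {x : ℂ}
    (hx : x ∈ Algebra.adjoin ℤ {α}) : ∃ u v : ℤ, x = u + v * α := by
  have hα : α ^ 2 = a * α - q := by linear_combination α * htr - hnm
  induction hx using Algebra.adjoin_induction with
  | mem x hx => exact ⟨0, 1, by simpa using hx⟩
  | algebraMap r => exact ⟨r, 0, by simp⟩
  | add x y _ _ hx hy =>
    obtain ⟨u, v, rfl⟩ := hx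
    obtain ⟨u', v', rfl⟩ := hy
    exact ⟨u + u', v + v', by push_cast; ring⟩
  | mul x y _ _ hx hy =>
    obtain ⟨u, v, rfl⟩ := hx
    obtain ⟨u', v', rfl⟩ := hy
    exact ⟨u * u' - q * v * v', u * v' + v * u' + a * v * v', by
      push_cast; linear_combination (v * v' : ℂ) * hα⟩

lemma conj_mem_adjoin (htr : α + conj α = a) : conj α ∈ Algebra.adjoin ℤ {α} := by
  rw [eq_sub_of_add_eq' htr]
  exact sub_mem (intCast_mem _ a) (Algebra.self_mem_adjoin_singleton ℤ α)

lemma one_le_norm_of_mem_adjoin (htr : α + conj α = a) (hnm : α * conj α = q) {x : ℂ}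
    (hx : x ∈ Algebra.adjoin ℤ {α}) (hx0 : x ≠ 0) : 1 ≤ ‖x‖ := by
  obtain ⟨u, v, rfl⟩ := exists_eq_add_mul_of_mem_adjoin htr hnm hx
  have hnormSq : normSq (u + v * α) = (u ^ 2 + a * u * v + q * v ^ 2 : ℤ) := by
    rw [← ofReal_inj, ← mul_conj]
    simp only [map_add, map_mul, map_intCast]
    push_cast
    linear_combination (u * v : ℂ) * htr + (v ^ 2 : ℂ) * hnm
  have hpos : 0 < normSq (u + v * α) := normSq_pos.mpr hx0
  rw [hnormSq, Int.cast_pos] at hpos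
  rw [← one_le_sq_iff₀ (norm_nonneg _), ← normSq_eq_norm_sq, hnormSq]
  exact_mod_cast hpos

lemma pos_of_mul_conj_eq_intCast (hnm : α * conj α = q) (hα : α ≠ 0) : 0 < q := by
  rw [mul_conj, ← ofReal_intCast, ofReal_inj] at hnm
  exact_mod_cast hnm ▸ normSq_pos.mpr hα

lemma norm_le_of_mul_conj_eq_intCast (hnm : α * conj α = q) (hα : α ≠ 0) : ‖α‖ ≤ q := by
  have hq : (1 : ℝ) ≤ q := by exact_mod_cast pos_of_mul_conj_eq_intCast hnm hα
  rw [mul_conj, normSq_eq_norm_sq, ← ofReal_intCast, ofReal_inj] at hnm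
  nlinarith [norm_nonneg α]

lemma exists_pow_mul_conj_pow_eq (htr : α + conj α = a) (hnm : α * conj α = q) (hα : α ≠ 0)
    {L : ℤ} (hL : q + |a| ≤ L) (i j : ℕ) :
    ∃ u v : ℤ, α ^ i * conj α ^ j = u + v * α ∧ |u| ≤ L ^ (i + j) ∧ |v| ≤ L ^ (i + j) := by
  have hq : 0 < q := pos_of_mul_conj_eq_intCast hnm hα
  have hbound {u v w b c : ℤ} {m : ℕ} (hu : |u| ≤ L ^ m) (hv : |v| ≤ L ^ m)
      (hw : w = b * u + c * v) (hbc : |b| + |c| ≤ q + |a|) : |w| ≤ L ^ (m + 1) :=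
    calc |w| ≤ |b| * |u| + |c| * |v| := by
          rw [hw, ← abs_mul, ← abs_mul]; exact abs_add_le _ _
      _ ≤ |b| * L ^ m + |c| * L ^ m := by gcongr
      _ = (|b| + |c|) * L ^ m := by ring
      _ ≤ L * L ^ m := by
        gcongr
        · exact (abs_nonneg u).trans hu
        · exact hbc.trans hL
      _ = L ^ (m + 1) := by ring
  have h0q : |0| + |-q| ≤ q + |a| := by simp [abs_of_pos hq]
  have haq : |a| + |q| ≤ q + |a| := by rw [abs_of_pos hq, add_comm]
  have h1a : |1| + |a| ≤ q + |a| := by rw [abs_one]; gcongr; exact hq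
  have h10 : |(-1)| + |0| ≤ q + |a| := by
    rw [abs_neg, abs_one, abs_zero]; linarith [abs_nonneg a, Int.add_one_le_iff.mpr hq]
  induction i with
  | zero =>
    induction j with
    | zero => exact ⟨1, 0, by simp⟩
    | succ j ih =>
      obtain ⟨u, v, huv, hu, hv⟩ := ih
      refine ⟨a * u + q * v, -u, ?_, hbound hu hv rfl haq, hbound hu hv (by ring) h10⟩
      push_cast
      linear_combination conj α * huv + (u : ℂ) * htr + (v : ℂ) * hnm
  | succ i ih =>
    obtain ⟨u, v, huv, hu, hv⟩ := ih
    rw [Nat.succ_add]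
    refine ⟨-q * v, u + a * v, ?_, hbound hu hv (by ring) h0q, hbound hu hv (by ring) h1a⟩
    push_cast
    linear_combination α * huv + (α * v) * htr - (v : ℂ) * hnm

-- With `γ = α / conj α`, multiplication by a power of `conj α` clears the denominators of the
-- powers of `γ` and lands in the discrete ring `ℤ[α]`.
lemma conj_pow_mul_div_conj_pow (hα : α ≠ 0) {m n : ℕ} (hmn : m ≤ n) :
    conj α ^ n * (α / conj α) ^ m = α ^ m * conj α ^ (n - m) := by
  have hconj : conj α ≠ 0 := (map_ne_zero _).mpr hα
  rw [div_pow, ← pow_sub_mul_pow _ hmn]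
  field_simp

lemma conj_pow_mul_bieval (hα : α ≠ 0) {I J : ℕ} (p : Fin I × Fin J → ℤ) (z : ℤ) (s : ℕ) :
    conj α ^ (J * s) * bieval p (z : ℂ) ((α / conj α) ^ s) =
      ∑ ij, (p ij : ℂ) * z ^ (ij.1 : ℕ) * (α ^ (ij.2 * s) * conj α ^ (J * s - ij.2 * s)) := by
  rw [bieval, Finset.mul_sum]
  refine Finset.sum_congr rfl fun ij _ ↦ ?_
  rw [← conj_pow_mul_div_conj_pow hα (Nat.mul_le_mul_right s ij.2.2.le), ← pow_mul,
    mul_comm s]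
  ring

lemma one_le_norm_pow_mul_norm_bieval (htr : α + conj α = a) (hnm : α * conj α = q) (hα : α ≠ 0)
    {I J : ℕ} {p : Fin I × Fin J → ℤ} {z : ℤ} {s : ℕ}
    (hne : bieval p (z : ℂ) ((α / conj α) ^ s) ≠ 0) :
    1 ≤ ‖α‖ ^ (J * s) * ‖bieval p (z : ℂ) ((α / conj α) ^ s)‖ := by
  have hmem : conj α ^ (J * s) * bieval p (z : ℂ) ((α / conj α) ^ s) ∈ Algebra.adjoin ℤ {α} := by
    rw [conj_pow_mul_bieval hα]
    exact sum_mem fun ij _ ↦ mul_mem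
      (mul_mem (intCast_mem _ _) (pow_mem (intCast_mem _ _) _))
      (mul_mem (pow_mem (Algebra.self_mem_adjoin_singleton ℤ α) _)
        (pow_mem (conj_mem_adjoin htr) _))
  have hconj : conj α ≠ 0 := (map_ne_zero _).mpr hα
  simpa using one_le_norm_of_mem_adjoin htr hnm hmem (mul_ne_zero (pow_ne_zero _ hconj) hne)

lemma one_le_norm_pow_mul_norm_div_conj_pow_sub_one (htr : α + conj α = a)
    (hnm : α * conj α = q) (hα : α ≠ 0) {d : ℕ} (hne : (α / conj α) ^ d ≠ 1) :
    1 ≤ ‖α‖ ^ d * ‖(α / conj α) ^ d - 1‖ := by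
  have hconj : conj α ≠ 0 := (map_ne_zero _).mpr hα
  have hmem : conj α ^ d * ((α / conj α) ^ d - 1) ∈ Algebra.adjoin ℤ {α} := by
    rw [mul_sub, mul_one, conj_pow_mul_div_conj_pow hα le_rfl, Nat.sub_self, pow_zero, mul_one]
    exact sub_mem (pow_mem (Algebra.self_mem_adjoin_singleton ℤ α) d)
      (pow_mem (conj_mem_adjoin htr) d)
  simpa using one_le_norm_of_mem_adjoin htr hnm hmem
    (mul_ne_zero (pow_ne_zero d hconj) (sub_ne_zero.mpr hne))

lemma exists_ne_zero_forall_bieval_eq_zero (htr : α + conj α = a) (hnm : α * conj α = q)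
    (hα : α ≠ 0) {L : ℤ} (hL : q + |a| ≤ L) {ι : Type*} [Fintype ι] [Nonempty ι]
    {I J S : ℕ} (hcard : I * J = 4 * Fintype.card ι) {z : ι → ℤ} {s : ι → ℕ} {Z : ℤ}
    (hZ : 1 ≤ Z) (hz : ∀ i, |z i| ≤ Z) (hs : ∀ i, s i ≤ S) :
    ∃ p : Fin I × Fin J → ℤ, p ≠ 0 ∧ (∀ ij, |(p ij : ℝ)| ≤ I * J * (Z ^ I * L ^ (J * S))) ∧
      ∀ i, bieval p (z i : ℂ) ((α / conj α) ^ s i) = 0 := by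
  have hL1 : 1 ≤ L := by linarith [pos_of_mul_conj_eq_intCast hnm hα, abs_nonneg a]
  choose u v huv hu hv using fun (i : ι) (ij : Fin I × Fin J) ↦
    exists_pow_mul_conj_pow_eq htr hnm hα hL (ij.2 * s i) (J * s i - ij.2 * s i)
  have hbound {w : ι → Fin I × Fin J → ℤ}
      (hw : ∀ i ij, |w i ij| ≤ L ^ (ij.2 * s i + (J * s i - ij.2 * s i))) (i : ι)
      (ij : Fin I × Fin J) :
      |((z i ^ (ij.1 : ℕ) * w i ij : ℤ) : ℝ)| ≤ Z ^ I * L ^ (J * S) := by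
    have hzI : |z i| ^ (ij.1 : ℕ) ≤ Z ^ I :=
      (pow_le_pow_left₀ (abs_nonneg _) (hz i) _).trans (pow_le_pow_right₀ hZ ij.1.2.le)
    have hwL : |w i ij| ≤ L ^ (J * S) := by
      refine (hw i ij).trans (pow_le_pow_right₀ hL1 ?_)
      rw [Nat.add_sub_cancel' (Nat.mul_le_mul_right _ ij.2.2.le)]
      exact Nat.mul_le_mul_left J (hs i)
    have h : |z i ^ (ij.1 : ℕ) * w i ij| ≤ Z ^ I * L ^ (J * S) := by
      rw [abs_mul, abs_pow]; gcongr
    exact_mod_cast h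
  obtain ⟨p, hp0, hpu, hpv, hp⟩ := exists_ne_zero_mulVec_eq_zero_of_card
    (Matrix.of fun i ij ↦ z i ^ (ij.1 : ℕ) * u i ij)
    (Matrix.of fun i ij ↦ z i ^ (ij.1 : ℕ) * v i ij)
    (one_le_mul_of_one_le_of_one_le (one_le_pow₀ (by exact_mod_cast hZ))
      (one_le_pow₀ (by exact_mod_cast hL1)))
    (hbound hu) (hbound hv) (by simpa using hcard)
  refine ⟨p, hp0, by simpa using hp, fun i ↦ ?_⟩
  have hpui : ∑ ij : Fin I × Fin J, ((z i : ℂ) ^ (ij.1 : ℕ) * u i ij) * p ij = 0 := by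
    exact_mod_cast congrFun hpu i
  have hpvi : ∑ ij : Fin I × Fin J, ((z i : ℂ) ^ (ij.1 : ℕ) * v i ij) * p ij = 0 := by
    exact_mod_cast congrFun hpv i
  have hconj : conj α ≠ 0 := (map_ne_zero _).mpr hα
  refine (mul_eq_zero.mp ?_).resolve_left (pow_ne_zero (J * s i) hconj)
  rw [conj_pow_mul_bieval hα]
  calc ∑ ij : Fin I × Fin J, (p ij : ℂ) * z i ^ (ij.1 : ℕ) *
        (α ^ (ij.2 * s i) * conj α ^ (J * s i - ij.2 * s i))
      = ∑ ij : Fin I × Fin J, (((z i : ℂ) ^ (ij.1 : ℕ) * u i ij) * p ij +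
          ((z i : ℂ) ^ (ij.1 : ℕ) * v i ij) * p ij * α) :=
        Finset.sum_congr rfl fun ij _ ↦ by rw [huv]; ring
    _ = 0 := by rw [Finset.sum_add_distrib, ← Finset.sum_mul, hpui, hpvi, zero_mul, add_zero]

end QuadraticIntegers

/-- The entire function `z ↦ exp (2πiz / n)`, whose value at `k : ℕ` is the `k`-th of the `n`-th
roots of unity; it interpolates the powers of a root of unity. -/
noncomputable def expDiv (n : ℕ) (z : ℂ) : ℂ := exp (2 * Real.pi * I * z / n)

lemma differentiable_expDiv (n : ℕ) : Differentiable ℂ (expDiv n) := by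
  unfold expDiv
  fun_prop

lemma norm_expDiv_natCast (n m : ℕ) : ‖expDiv n m‖ = 1 := by
  have : (2 * Real.pi * I * m / n : ℂ) = (2 * Real.pi * m / n : ℝ) * I := by push_cast; ring
  rw [expDiv, this, norm_exp_ofReal_mul_I]

lemma expDiv_mul_add_mul {n : ℕ} (hn : n ≠ 0) (k s t : ℕ) :
    expDiv n (k * s + n * t : ℕ) = expDiv n k ^ s := by
  have hn' : (n : ℂ) ≠ 0 := Nat.cast_ne_zero.mpr hn
  have hsplit : (2 * Real.pi * I * (k * s + n * t : ℕ) / n : ℂ) =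
      s * (2 * Real.pi * I * k / n) + t * (2 * Real.pi * I) := by
    push_cast; field_simp
  rw [expDiv, hsplit, exp_add, exp_nat_mul_two_pi_mul_I, mul_one, exp_nat_mul, expDiv]

lemma expDiv_natCast_pow_self {n : ℕ} (hn : n ≠ 0) (k : ℕ) : expDiv n k ^ n = 1 := by
  have hn' : (n : ℂ) ≠ 0 := Nat.cast_ne_zero.mpr hn
  rw [expDiv, ← exp_nat_mul, mul_div_cancel₀ _ hn', mul_comm, exp_nat_mul_two_pi_mul_I]

lemma norm_expDiv_le {n r : ℕ} {z : ℂ} (hn : n ≠ 0) (hz : ‖z‖ ≤ n * r) :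
    ‖expDiv n z‖ ≤ 2 ^ (16 * r) := by
  have hn' : (0 : ℝ) < n := by positivity
  calc ‖expDiv n z‖ ≤ Real.exp ‖(2 * Real.pi * I * z / n : ℂ)‖ := norm_exp_le_exp_norm _
    _ ≤ Real.exp (8 * r) := by
      gcongr
      simp only [norm_div, norm_mul, norm_ofNat, norm_real, Real.norm_eq_abs,
        abs_of_pos Real.pi_pos, norm_I, mul_one, norm_natCast]
      rw [div_le_iff₀ hn']
      nlinarith [Real.pi_le_four, norm_nonneg z]
    _ = Real.exp 1 ^ (8 * r) := by rw [← Real.exp_nat_mul]; push_cast; ring_nf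
    _ ≤ (2 ^ 2) ^ (8 * r) := by gcongr; linarith [Real.exp_one_lt_three]
    _ = 2 ^ (16 * r) := by rw [← pow_mul]; ring_nf

/-- The polynomial with coefficients `p` vanishes at the points `(k s + n t, γ ^ s)` with
`s, t < S`. For `γ = expDiv n k` these are the points `(z, expDiv n z)` with `z = k s + n t`. -/
def VanishesOnGrid {I J : ℕ} (p : Fin I × Fin J → ℤ) (γ : ℂ) (n k S : ℕ) : Prop :=
  ∀ s < S, ∀ t < S, bieval p ((k * s + n * t : ℕ) : ℂ) (γ ^ s) = 0

section Extrapolation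

variable {α γ : ℂ} {a q : ℤ} {I J n k S S' Y h κ E : ℕ} {p : Fin I × Fin J → ℤ} {ε : ℝ}

-- The disc has nine times the radius of the one containing the points `k s + n t`, `s, t < S`, as
-- the Schwarz lemma will require.
lemma norm_bieval_expDiv_le (hp : ∀ ij, |(p ij : ℝ)| ≤ 2 ^ h) (hIJ : I * J ≤ 2 ^ Y)
    (hn : n ≠ 0) (hY : 20 * (n * S) ≤ 2 ^ Y) {z : ℂ} (hz : ‖z‖ ≤ 18 * (n * S)) :
    ‖bieval p z (expDiv n z)‖ ≤ 2 ^ (h + Y * I + Y + 288 * (J * S)) := by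
  have hzY : ‖z‖ ≤ 2 ^ Y := by
    have : (20 * (n * S) : ℝ) ≤ 2 ^ Y := by exact_mod_cast hY
    nlinarith [norm_nonneg z]
  have hexp : ‖expDiv n z‖ ≤ 2 ^ (16 * (18 * S)) :=
    norm_expDiv_le hn (by push_cast; linarith)
  calc ‖bieval p z (expDiv n z)‖
      ≤ I * J * (2 ^ h * (2 ^ Y) ^ I * (2 ^ (16 * (18 * S))) ^ J) :=
        norm_bieval_le hp (one_le_pow₀ one_le_two) hzY (one_le_pow₀ one_le_two) hexp
    _ ≤ 2 ^ Y * (2 ^ h * (2 ^ Y) ^ I * (2 ^ (16 * (18 * S))) ^ J) := by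
      gcongr; exact_mod_cast hIJ
    _ = 2 ^ (h + Y * I + Y + 288 * (J * S)) := by rw [← pow_mul, ← pow_mul]; ring_nf

lemma mul_add_mul_le_of_lt {s t : ℕ} (hk : k ≤ n) (hs : s < S) (ht : t < S) :
    k * s + n * t ≤ 2 * (n * S) := by
  linarith [Nat.mul_le_mul hk hs.le, Nat.mul_le_mul_left n ht.le]

lemma norm_bieval_pow_sub_bieval_expDiv_le (hp : ∀ ij, |(p ij : ℝ)| ≤ 2 ^ h)
    (hIJ : I * J ≤ 2 ^ Y) (hJS : J * S ≤ 2 ^ Y) (hn : n ≠ 0) (hk : k ≤ n)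
    (hY : 20 * (n * S) ≤ 2 ^ Y) (hγ : ‖γ‖ ≤ 1) (hε : ‖γ - expDiv n k‖ ≤ ε) {s t : ℕ}
    (hs : s < S) (ht : t < S) :
    ‖bieval p ((k * s + n * t : ℕ) : ℂ) (γ ^ s) -
        bieval p ((k * s + n * t : ℕ) : ℂ) (expDiv n (k * s + n * t : ℕ))‖ ≤
      2 ^ (h + Y * I + 2 * Y) * ε := by
  have hε0 : 0 ≤ ε := (norm_nonneg _).trans hε
  have hω : ‖expDiv n k‖ ≤ 1 := (norm_expDiv_natCast n k).le
  have hz : ‖((k * s + n * t : ℕ) : ℂ)‖ ≤ 2 ^ Y := by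
    rw [norm_natCast]
    exact_mod_cast (mul_add_mul_le_of_lt hk hs ht).trans (by omega)
  have hpow : ‖γ ^ s - expDiv n k ^ s‖ ≤ S * ε :=
    (norm_pow_sub_pow_le hγ hω s).trans (by gcongr)
  rw [expDiv_mul_add_mul hn]
  calc _ ≤ I * J * (2 ^ h * (2 ^ Y) ^ I * (J * ‖γ ^ s - expDiv n k ^ s‖)) :=
        norm_bieval_sub_bieval_le hp (one_le_pow₀ one_le_two) hz
          (by rw [norm_pow]; exact pow_le_one₀ (norm_nonneg _) hγ)
          (by rw [norm_pow]; exact pow_le_one₀ (norm_nonneg _) hω)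
    _ ≤ (I * J) * (2 ^ h * (2 ^ Y) ^ I * (J * (S * ε))) := by gcongr
    _ = (I * J : ℕ) * (J * S : ℕ) * (2 ^ h * (2 ^ Y) ^ I * ε) := by push_cast; ring
    _ ≤ 2 ^ Y * 2 ^ Y * (2 ^ h * (2 ^ Y) ^ I * ε) := by
      gcongr
      · exact_mod_cast hIJ
      · exact_mod_cast hJS
    _ = 2 ^ (h + Y * I + 2 * Y) * ε := by rw [← pow_mul]; ring_nf

lemma interpolation_error_le {X η : ℝ} (N : ℕ) (hX : 0 ≤ X) (hXY : X ≤ 2 ^ Y) (hη : 0 ≤ η) :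
    2 * (N * (η * X ^ N)) + η ≤ 2 ^ ((Y + 1) * N + 2) * η := by
  have hN : (N : ℝ) ≤ 2 ^ N := by exact_mod_cast N.lt_two_pow_self.le
  have hone : (1 : ℝ) ≤ 2 ^ ((Y + 1) * N + 1) := one_le_pow₀ one_le_two
  calc 2 * (N * (η * X ^ N)) + η ≤ 2 * (2 ^ N * (η * (2 ^ Y) ^ N)) + η := by gcongr
    _ = 2 ^ ((Y + 1) * N + 1) * η + 1 * η := by rw [← pow_mul]; ring
    _ ≤ 2 ^ ((Y + 1) * N + 1) * η + 2 ^ ((Y + 1) * N + 1) * η := by gcongr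
    _ = 2 ^ ((Y + 1) * N + 2) * η := by ring

lemma norm_le_of_forall_norm_le_on_grid {G : ℂ → ℂ} {M η : ℝ} (hG : Differentiable ℂ G)
    (hn : n ≠ 0) (hk : k ≤ n) (hSS' : S ≤ S')
    (hinj : Set.InjOn (fun st : ℕ × ℕ ↦ k * st.1 + n * st.2)
      (Finset.range S ×ˢ Finset.range S : Finset (ℕ × ℕ)))
    (hM : ∀ z, ‖z‖ ≤ 18 * (n * S') → ‖G z‖ ≤ M)
    (hη : ∀ s < S, ∀ t < S, ‖G (k * s + n * t : ℕ)‖ ≤ η) {s t : ℕ} (hs : s < S') (ht : t < S') :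
    ‖G (k * s + n * t : ℕ)‖ ≤
      M * (1 / 4) ^ S ^ 2 + 2 * ((S ^ 2 : ℕ) * (η * (10 * (2 * (n * S'))) ^ S ^ 2)) := by
  set W := (Finset.range S ×ˢ Finset.range S).image fun st ↦ k * st.1 + n * st.2
  have hcard : W.card = S ^ 2 := by
    rw [Finset.card_image_of_injOn hinj, Finset.card_product, Finset.card_range, sq]
  have hgrid {s t : ℕ} (hs : s < S') (ht : t < S') :
      ((k * s + n * t : ℕ) : ℝ) ≤ 2 * (n * S') := by
    exact_mod_cast mul_add_mul_le_of_lt hk hs ht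
  have hW : ∀ w ∈ W, ∃ s < S, ∃ t < S, w = k * s + n * t := fun w hw ↦ by
    obtain ⟨⟨s, t⟩, hst, rfl⟩ := Finset.mem_image.mp hw
    obtain ⟨hs, ht⟩ := Finset.mem_product.mp hst
    exact ⟨s, Finset.mem_range.mp hs, t, Finset.mem_range.mp ht, rfl⟩
  have hρ : (1 : ℝ) ≤ 2 * (n * S') := by
    have hS' : 0 < S' := Nat.zero_lt_of_lt hs
    exact_mod_cast (by positivity : 0 < 2 * (n * S'))
  rw [← hcard]
  refine norm_le_of_forall_norm_le_of_natCast hρ hG.diffContOnCl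
    (fun z hz ↦ hM z ?_) (fun w hw ↦ ?_) (fun w hw ↦ ?_) ?_
  · linarith [mem_sphere_zero_iff_norm.mp hz]
  · obtain ⟨s, hs, t, ht, rfl⟩ := hW w hw
    exact hgrid (hs.trans_le hSS') (ht.trans_le hSS')
  · obtain ⟨s, hs, t, ht, rfl⟩ := hW w hw
    exact hη s hs t ht
  · rw [mem_closedBall_zero_iff, norm_natCast]
    exact hgrid hs ht

lemma VanishesOnGrid.norm_bieval_le (hzero : VanishesOnGrid p γ n k S) (hSS' : S ≤ S')
    (hinj : Set.InjOn (fun st : ℕ × ℕ ↦ k * st.1 + n * st.2)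
      (Finset.range S ×ˢ Finset.range S : Finset (ℕ × ℕ)))
    (hp : ∀ ij, |(p ij : ℝ)| ≤ 2 ^ h) (hIJ : I * J ≤ 2 ^ Y) (hJS : J * S' ≤ 2 ^ Y) (hn : n ≠ 0)
    (hk : k ≤ n) (hY : 20 * (n * S') ≤ 2 ^ Y) (hγ : ‖γ‖ ≤ 1) (hε : ‖γ - expDiv n k‖ ≤ ε)
    {s t : ℕ} (hs : s < S') (ht : t < S') :
    ‖bieval p ((k * s + n * t : ℕ) : ℂ) (γ ^ s)‖ ≤
      2 ^ (h + Y * I + Y + 288 * (J * S')) * (1 / 4) ^ S ^ 2 +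
        2 ^ (h + Y * I + 2 * Y + (Y + 1) * S ^ 2 + 2) * ε := by
  set G : ℂ → ℂ := fun z ↦ bieval p z (expDiv n z) with hG
  set c := h + Y * I + 2 * Y
  have hε0 : 0 ≤ ε := (norm_nonneg _).trans hε
  have hdiff : Differentiable ℂ G := by
    have := differentiable_expDiv n
    simp only [hG, bieval]
    fun_prop
  have happrox {s t : ℕ} (hs : s < S') (ht : t < S') :
      ‖bieval p ((k * s + n * t : ℕ) : ℂ) (γ ^ s) - G (k * s + n * t : ℕ)‖ ≤ 2 ^ c * ε :=
    norm_bieval_pow_sub_bieval_expDiv_le hp hIJ hJS hn hk hY hγ hε hs ht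
  have hGsmall : ∀ s < S, ∀ t < S, ‖G (k * s + n * t : ℕ)‖ ≤ 2 ^ c * ε := fun s hs t ht ↦ by
    have := happrox (hs.trans_le hSS') (ht.trans_le hSS')
    rwa [hzero s hs t ht, zero_sub, norm_neg] at this
  have hGbound := norm_le_of_forall_norm_le_on_grid hdiff hn hk hSS' hinj
    (fun z hz ↦ norm_bieval_expDiv_le hp hIJ hn hY hz) hGsmall hs ht
  have hY' : (10 * (2 * (n * S')) : ℝ) ≤ 2 ^ Y := by
    have : (20 * (n * S') : ℝ) ≤ 2 ^ Y := by exact_mod_cast hY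
    linarith
  have herror := interpolation_error_le (S ^ 2) (by positivity) hY' (by positivity : 0 ≤ 2 ^ c * ε)
  have hpow : (2 : ℝ) ^ (c + (Y + 1) * S ^ 2 + 2) * ε =
      2 ^ ((Y + 1) * S ^ 2 + 2) * (2 ^ c * ε) := by ring
  rw [hpow]
  linarith [norm_le_norm_sub_add (bieval p ((k * s + n * t : ℕ) : ℂ) (γ ^ s))
    (G (k * s + n * t : ℕ)), happrox hs ht]

lemma two_pow_mul_half_pow_le_quarter {m l : ℕ} (h : m + 2 ≤ l) :
    (2 : ℝ) ^ m * (1 / 2) ^ l ≤ 1 / 4 := by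
  obtain ⟨d, rfl⟩ := Nat.exists_eq_add_of_le h
  calc (2 : ℝ) ^ m * (1 / 2) ^ (m + 2 + d) = (2 * (1 / 2)) ^ m * (1 / 4) * (1 / 2) ^ d := by
        rw [mul_pow]; ring
    _ = 1 / 4 * (1 / 2) ^ d := by norm_num
    _ ≤ 1 / 4 := mul_le_of_le_one_right (by norm_num) (pow_le_one₀ (by norm_num) (by norm_num))

lemma VanishesOnGrid.extrapolate (htr : α + conj α = a) (hnm : α * conj α = q) (hα : α ≠ 0)
    (hzero : VanishesOnGrid p (α / conj α) n k S) (hSS' : S ≤ S')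
    (hinj : Set.InjOn (fun st : ℕ × ℕ ↦ k * st.1 + n * st.2)
      (Finset.range S ×ˢ Finset.range S : Finset (ℕ × ℕ)))
    (hp : ∀ ij, |(p ij : ℝ)| ≤ 2 ^ h) (hIJ : I * J ≤ 2 ^ Y) (hJS : J * S' ≤ 2 ^ Y) (hn : n ≠ 0)
    (hk : k ≤ n) (hY : 20 * (n * S') ≤ 2 ^ Y) (hκ : ‖α‖ ≤ 2 ^ κ)
    (hgrowth : h + Y * I + Y + (κ + 288) * (J * S') + 2 ≤ 2 * S ^ 2)
    (hE : κ * (J * S') + h + Y * I + 2 * Y + (Y + 1) * S ^ 2 + 4 ≤ E)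
    (hε : ‖α / conj α - expDiv n k‖ ≤ (1 / 2) ^ E) : VanishesOnGrid p (α / conj α) n k S' := by
  intro s hs t ht
  by_contra hne
  have hupper := hzero.norm_bieval_le hSS' hinj hp hIJ hJS hn hk hY (norm_div_conj hα).le hε hs ht
  have hlower : 1 ≤ ‖α‖ ^ (J * s) *
      ‖bieval p ((k * s + n * t : ℕ) : ℂ) ((α / conj α) ^ s)‖ := by
    rw [← Int.cast_natCast (R := ℂ)] at hne ⊢
    exact one_le_norm_pow_mul_norm_bieval htr hnm hα hne
  have hαpow : ‖α‖ ^ (J * s) ≤ 2 ^ (κ * (J * S')) := by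
    rw [pow_mul 2]
    exact (pow_le_pow_left₀ (norm_nonneg α) hκ _).trans
      (pow_le_pow_right₀ (one_le_pow₀ one_le_two) (Nat.mul_le_mul_left J hs.le))
  have hmain : (2 : ℝ) ^ (κ * (J * S')) *
      (2 ^ (h + Y * I + Y + 288 * (J * S')) * (1 / 4) ^ S ^ 2) ≤ 1 / 4 := by
    have hquarter : (1 / 4 : ℝ) ^ S ^ 2 = (1 / 2) ^ (2 * S ^ 2) := by rw [pow_mul]; norm_num
    rw [hquarter, ← mul_assoc, ← pow_add]
    exact two_pow_mul_half_pow_le_quarter (by linarith)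
  have herror : (2 : ℝ) ^ (κ * (J * S')) *
      (2 ^ (h + Y * I + 2 * Y + (Y + 1) * S ^ 2 + 2) * (1 / 2) ^ E) ≤ 1 / 4 := by
    rw [← mul_assoc, ← pow_add]
    exact two_pow_mul_half_pow_le_quarter (by linarith)
  have : ‖α‖ ^ (J * s) * ‖bieval p ((k * s + n * t : ℕ) : ℂ) ((α / conj α) ^ s)‖ ≤
      1 / 4 + 1 / 4 :=
    (mul_le_mul hαpow hupper (norm_nonneg _) (by positivity)).trans
      (by
        rw [mul_add]
        refine add_le_add hmain (le_trans ?_ herror)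
        gcongr)
  linarith

end Extrapolation

section Parameters

variable {κ K Y S : ℕ}

-- The polynomial has degrees less than `I = K ^ 4 * Y` in `x` and `J = 64 * Y` in `y`, and is
-- constructed to vanish on the grid of side `4 * K ^ 2 * Y`, so that `I * J` is four times the
-- number of points. Extrapolating multiplies the side by `K`; after two rounds it exceeds `I`
-- and `J`.
lemma extrapolation_growth_le (hK : K = 16 * (κ + 288)) (hY : 1 ≤ Y) (hS : 4 * K ^ 2 * Y ≤ S) :
    (Y + Y * (K ^ 4 * Y) + κ * (64 * Y * (4 * K ^ 2 * Y))) + Y * (K ^ 4 * Y) + Y +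
      (κ + 288) * (64 * Y * (K * S)) + 2 ≤ 2 * S ^ 2 := by
  have hgain : (κ + 288) * (64 * Y * (K * S)) ≤ S ^ 2 :=
    calc (κ + 288) * (64 * Y * (K * S)) = 4 * K ^ 2 * Y * S := by rw [hK]; ring
      _ ≤ S ^ 2 := by rw [sq S]; gcongr
  have hcoeff : 256 * κ * K ^ 2 ≤ K ^ 4 :=
    calc 256 * κ * K ^ 2 ≤ K ^ 2 * K ^ 2 := by gcongr; rw [hK]; nlinarith
      _ = K ^ 4 := by ring
  have hK4 : 4 ≤ K ^ 4 := by
    calc 4 ≤ K := by omega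
      _ ≤ K ^ 4 := Nat.le_self_pow (by norm_num) K
  calc _ = 2 * (K ^ 4 * Y ^ 2) + 256 * κ * K ^ 2 * Y ^ 2 + 2 * Y + 2 +
        (κ + 288) * (64 * Y * (K * S)) := by ring
    _ ≤ 2 * (K ^ 4 * Y ^ 2) + K ^ 4 * Y ^ 2 + K ^ 4 * Y ^ 2 + S ^ 2 := by
      have : 2 * Y + 2 ≤ K ^ 4 * Y ^ 2 := by nlinarith
      have : 256 * κ * K ^ 2 * Y ^ 2 ≤ K ^ 4 * Y ^ 2 := by gcongr
      linarith
    _ ≤ (4 * K ^ 2 * Y) ^ 2 + S ^ 2 := by nlinarith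
    _ ≤ 2 * S ^ 2 := by rw [two_mul]; gcongr

lemma extrapolation_error_le (hK : K = 16 * (κ + 288)) (hY : 1 ≤ Y) (hS : S ≤ 4 * K ^ 3 * Y) :
    κ * (64 * Y * (K * S)) + (Y + Y * (K ^ 4 * Y) + κ * (64 * Y * (4 * K ^ 2 * Y))) +
      Y * (K ^ 4 * Y) + 2 * Y + (Y + 1) * S ^ 2 + 4 ≤ 80 * (K ^ 6 * Y ^ 3) := by
  have hK0 : 1 ≤ K := by omega
  have hκ : 16 * κ ≤ K := by omega
  have hmono {i j : ℕ} (hi : i ≤ 6) (hj : j ≤ 3) : K ^ i * Y ^ j ≤ K ^ 6 * Y ^ 3 :=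
    Nat.mul_le_mul (Nat.pow_le_pow_right hK0 hi) (Nat.pow_le_pow_right hY hj)
  have hliouville : κ * (64 * Y * (K * S)) ≤ 16 * (K ^ 6 * Y ^ 3) :=
    calc κ * (64 * Y * (K * S)) ≤ κ * (64 * Y * (K * (4 * K ^ 3 * Y))) := by gcongr
      _ = 16 * (16 * κ * K ^ 4 * Y ^ 2) := by ring
      _ ≤ 16 * (K * K ^ 4 * Y ^ 2) := by gcongr
      _ = 16 * (K ^ 5 * Y ^ 2) := by ring
      _ ≤ 16 * (K ^ 6 * Y ^ 3) := by gcongr 16 * ?_; exact hmono (by norm_num) (by norm_num)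
  have hcoeff : κ * (64 * Y * (4 * K ^ 2 * Y)) ≤ 16 * (K ^ 6 * Y ^ 3) :=
    calc κ * (64 * Y * (4 * K ^ 2 * Y)) = 16 * (16 * κ * K ^ 2 * Y ^ 2) := by ring
      _ ≤ 16 * (K * K ^ 2 * Y ^ 2) := by gcongr
      _ = 16 * (K ^ 3 * Y ^ 2) := by ring
      _ ≤ 16 * (K ^ 6 * Y ^ 3) := by gcongr 16 * ?_; exact hmono (by norm_num) (by norm_num)
  have hpoints : (Y + 1) * S ^ 2 ≤ 32 * (K ^ 6 * Y ^ 3) :=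
    calc (Y + 1) * S ^ 2 ≤ (2 * Y) * (4 * K ^ 3 * Y) ^ 2 := by gcongr; omega
      _ = 32 * (K ^ 6 * Y ^ 3) := by ring
  have hrest : 2 * (Y * (K ^ 4 * Y)) + 3 * Y + 4 ≤ 9 * (K ^ 6 * Y ^ 3) := by
    have hYI := hmono (i := 4) (j := 2) (by norm_num) (by norm_num)
    have hY1 := hmono (i := 0) (j := 1) (by norm_num) (by norm_num)
    linarith
  linarith [Nat.zero_le (K ^ 6 * Y ^ 3)]

end Parameters

section RootOfUnityApproximation

variable {α : ℂ} {a q : ℤ} {I J n k S Y κ K E : ℕ}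

lemma le_orderOf_expDiv (htr : α + conj α = a) (hnm : α * conj α = q) (hα : α ≠ 0)
    (hγ : ¬IsOfFinOrder (α / conj α)) (hn : n ≠ 0) (hκ : ‖α‖ ≤ 2 ^ κ)
    (hE : (κ + 1) * S + 2 ≤ E) (hε : ‖α / conj α - expDiv n k‖ ≤ (1 / 2) ^ E) :
    S ≤ orderOf (expDiv n k) := by
  set γ := α / conj α
  set ω := expDiv n k
  set d := orderOf ω
  by_contra! hd
  have hωfin : IsOfFinOrder ω :=
    isOfFinOrder_iff_pow_eq_one.mpr ⟨n, Nat.pos_of_ne_zero hn, expDiv_natCast_pow_self hn k⟩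
  have hγd : γ ^ d ≠ 1 := fun h ↦
    hγ (isOfFinOrder_iff_pow_eq_one.mpr ⟨d, hωfin.orderOf_pos, h⟩)
  have hdist : ‖γ ^ d - 1‖ ≤ d * (1 / 2) ^ E := by
    rw [← pow_orderOf_eq_one ω]
    exact (norm_pow_sub_pow_le (norm_div_conj hα).le (norm_expDiv_natCast n k).le d).trans
      (by gcongr)
  have hd2 : (d : ℝ) ≤ 2 ^ d := by exact_mod_cast d.lt_two_pow_self.le
  have hcontra : (1 : ℝ) ≤ 1 / 4 :=
    calc 1 ≤ ‖α‖ ^ d * ‖γ ^ d - 1‖ :=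
          one_le_norm_pow_mul_norm_div_conj_pow_sub_one htr hnm hα hγd
      _ ≤ (2 ^ κ) ^ d * (2 ^ d * (1 / 2) ^ E) := by
        gcongr
        exact hdist.trans (by gcongr)
      _ = 2 ^ ((κ + 1) * d) * (1 / 2) ^ E := by rw [← pow_mul]; ring
      _ ≤ 1 / 4 := two_pow_mul_half_pow_le_quarter
        ((Nat.add_le_add_right (Nat.mul_le_mul_left _ hd.le) 2).trans hE)
  norm_num at hcontra

lemma injOn_mul_add_mul_of_le_orderOf (hn : n ≠ 0) (hS : S ≤ orderOf (expDiv n k)) :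
    Set.InjOn (fun st : ℕ × ℕ ↦ k * st.1 + n * st.2)
      (Finset.range S ×ˢ Finset.range S : Finset (ℕ × ℕ)) := by
  rintro ⟨s, t⟩ hst ⟨s', t'⟩ hst' (heq : k * s + n * t = k * s' + n * t')
  have hs := (Finset.mem_product.mp hst).1
  have hs' := (Finset.mem_product.mp hst').1
  have hpow : expDiv n k ^ s = expDiv n k ^ s' := by
    rw [← expDiv_mul_add_mul hn k s t, heq, expDiv_mul_add_mul hn]
  obtain rfl : s = s' := (IsPrimitiveRoot.orderOf _).pow_inj
    ((Finset.mem_range.mp hs).trans_le hS) ((Finset.mem_range.mp hs').trans_le hS) hpow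
  obtain rfl : t = t' := by simpa [hn] using heq
  rfl

lemma exists_ne_zero_vanishesOnGrid (htr : α + conj α = a) (hnm : α * conj α = q) (hα : α ≠ 0)
    (hκ : q + |a| ≤ 2 ^ κ) (hk : k ≤ n) (hS : S ≠ 0) (hIJ : I * J = 4 * S ^ 2)
    (hIJY : I * J ≤ 2 ^ Y) (hY : 2 * (n * S) ≤ 2 ^ Y) :
    ∃ p : Fin I × Fin J → ℤ, p ≠ 0 ∧ (∀ ij, |(p ij : ℝ)| ≤ 2 ^ (Y + Y * I + κ * (J * S))) ∧
      VanishesOnGrid p (α / conj α) n k S := by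
  have : Nonempty (Fin S × Fin S) := ⟨⟨0, Nat.pos_of_ne_zero hS⟩, ⟨0, Nat.pos_of_ne_zero hS⟩⟩
  obtain ⟨p, hp0, hp, hzero⟩ := exists_ne_zero_forall_bieval_eq_zero htr hnm hα hκ
    (ι := Fin S × Fin S) (z := fun st ↦ (k * st.1 + n * st.2 : ℕ)) (s := fun st ↦ st.1)
    (I := I) (J := J) (S := S) (Z := 2 ^ Y)
    (by rw [hIJ, Fintype.card_prod, Fintype.card_fin, sq]) (one_le_pow₀ one_le_two)
    (fun st ↦ by
      rw [Nat.abs_cast]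
      exact_mod_cast (mul_add_mul_le_of_lt hk st.1.2 st.2.2).trans hY)
    (fun st ↦ st.1.2.le)
  refine ⟨p, hp0, fun ij ↦ ?_, fun s hs t ht ↦ ?_⟩
  · calc |(p ij : ℝ)| ≤ (I * J : ℕ) * (((2 : ℝ) ^ Y) ^ I * (2 ^ κ) ^ (J * S)) := by
          simpa using hp ij
      _ ≤ 2 ^ Y * ((2 ^ Y) ^ I * (2 ^ κ) ^ (J * S)) := by gcongr; exact_mod_cast hIJY
      _ = 2 ^ (Y + Y * I + κ * (J * S)) := by rw [← pow_mul, ← pow_mul]; ring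
  · simpa using hzero (⟨s, hs⟩, ⟨t, ht⟩)

lemma VanishesOnGrid.eq_zero {p : Fin I × Fin J → ℤ} {γ : ℂ} (hzero : VanishesOnGrid p γ n k S)
    (hn : n ≠ 0) (hI : I ≤ S) (hJ : J ≤ S) (hγ0 : γ ≠ 0) (hγ : ¬IsOfFinOrder γ) : p = 0 := by
  refine eq_zero_of_forall_bieval_eq_zero
    (x := fun s : Fin J ↦ fun t : Fin I ↦ ((k * s + n * t : ℕ) : ℂ)) (y := fun s ↦ γ ^ (s : ℕ))
    (fun s t t' h ↦ ?_)
    ((pow_injective_of_not_isOfFinOrder hγ0 hγ).comp Fin.val_injective)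
    fun s t ↦ hzero s (s.2.trans_le hJ) t (t.2.trans_le hI)
  have h' : k * (s : ℕ) + n * t = k * s + n * t' := Nat.cast_injective h
  exact Fin.val_injective (by simpa [hn] using h')

lemma grid_sizes_le_two_pow (hn : n ≠ 0) (hS : S ≤ 4 * K ^ 3 * Y)
    (hnY : 320 * (K ^ 4 * Y ^ 2 * n) ≤ 2 ^ Y) :
    K ^ 4 * Y * (64 * Y) ≤ 2 ^ Y ∧ 64 * Y * (K * S) ≤ 2 ^ Y ∧ 20 * (n * (K * S)) ≤ 2 ^ Y := by
  have hn1 : 1 ≤ n := Nat.one_le_iff_ne_zero.mpr hn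
  have hKS : K * S ≤ 4 * (K ^ 4 * Y) :=
    (Nat.mul_le_mul_left K hS).trans_eq (by ring)
  have hY2 : K ^ 4 * Y ^ 2 ≤ K ^ 4 * Y ^ 2 * n := Nat.le_mul_of_pos_right _ hn1
  have hYn : K ^ 4 * Y * n ≤ K ^ 4 * Y ^ 2 * n := by gcongr; exact Nat.le_self_pow two_ne_zero Y
  have hpos := Nat.zero_le (K ^ 4 * Y ^ 2 * n)
  refine ⟨?_, ?_, ?_⟩
  · linarith
  · linarith [Nat.mul_le_mul_left (64 * Y) hKS]
  · linarith [Nat.mul_le_mul_left (20 * n) hKS]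

lemma VanishesOnGrid.mul_left (htr : α + conj α = a) (hnm : α * conj α = q)
    (hα : α ≠ 0) (hγ : ¬IsOfFinOrder (α / conj α)) (hκ : ‖α‖ ≤ 2 ^ κ) (hn : n ≠ 0) (hk : k ≤ n)
    (hY : 1 ≤ Y) (hK : K = 16 * (κ + 288)) (hnY : 320 * (K ^ 4 * Y ^ 2 * n) ≤ 2 ^ Y)
    (hε : ‖α / conj α - expDiv n k‖ ≤ (1 / 2) ^ (80 * (K ^ 6 * Y ^ 3)))
    {p : Fin (K ^ 4 * Y) × Fin (64 * Y) → ℤ}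
    (hp : ∀ ij, |(p ij : ℝ)| ≤ 2 ^ (Y + Y * (K ^ 4 * Y) + κ * (64 * Y * (4 * K ^ 2 * Y))))
    (hSlow : 4 * K ^ 2 * Y ≤ S) (hSupp : S ≤ 4 * K ^ 3 * Y)
    (hzero : VanishesOnGrid p (α / conj α) n k S) :
    VanishesOnGrid p (α / conj α) n k (K * S) := by
  have hK0 : 1 ≤ K := by omega
  obtain ⟨hIJ, hJS, hnS⟩ := grid_sizes_le_two_pow hn hSupp hnY
  have hKY : K ^ 4 * Y ≤ K ^ 6 * Y ^ 3 :=
    Nat.mul_le_mul (Nat.pow_le_pow_right hK0 (by norm_num)) (Nat.le_self_pow three_ne_zero Y)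
  have hKY1 : 1 ≤ K ^ 6 * Y ^ 3 := Nat.mul_pos (Nat.pow_pos hK0) (Nat.pow_pos hY)
  have horder : (κ + 1) * S + 2 ≤ 80 * (K ^ 6 * Y ^ 3) :=
    calc (κ + 1) * S + 2 ≤ K * (4 * K ^ 3 * Y) + 2 := by gcongr; omega
      _ = 4 * (K ^ 4 * Y) + 2 := by ring
      _ ≤ 80 * (K ^ 6 * Y ^ 3) := by linarith
  have hinj := injOn_mul_add_mul_of_le_orderOf hn
    (le_orderOf_expDiv htr hnm hα hγ hn hκ horder hε)
  exact hzero.extrapolate htr hnm hα (Nat.le_mul_of_pos_left S hK0) hinj hp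
    hIJ hJS hn hk hnS hκ (extrapolation_growth_le hK hY hSlow)
    (extrapolation_error_le hK hY hSupp) hε

lemma half_pow_lt_norm_div_conj_sub_expDiv (htr : α + conj α = a) (hnm : α * conj α = q)
    (hα : α ≠ 0) (hγ : ¬IsOfFinOrder (α / conj α)) (hκ : q + |a| ≤ 2 ^ κ) (hn : n ≠ 0)
    (hk : k ≤ n) (hY : 1 ≤ Y) (hK : K = 16 * (κ + 288))
    (hnY : 320 * (K ^ 4 * Y ^ 2 * n) ≤ 2 ^ Y) :
    (1 / 2) ^ (80 * (K ^ 6 * Y ^ 3)) < ‖α / conj α - expDiv n k‖ := by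
  by_contra! hε
  have hακ : ‖α‖ ≤ 2 ^ κ :=
    (norm_le_of_mul_conj_eq_intCast hnm hα).trans
      (by exact_mod_cast (le_add_of_nonneg_right (abs_nonneg a)).trans hκ)
  have hK64 : 64 ≤ K := by omega
  have hK0 : 0 < K := by omega
  have hS0 : 4 * K ^ 2 * Y ≤ 4 * K ^ 3 * Y := by gcongr; omega
  obtain ⟨hIJ, -, hnS⟩ := grid_sizes_le_two_pow hn hS0 hnY
  obtain ⟨p, hp0, hp, hzero⟩ := exists_ne_zero_vanishesOnGrid (I := K ^ 4 * Y) (J := 64 * Y)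
    (S := 4 * K ^ 2 * Y) htr hnm hα hκ hk (by positivity) (by ring) hIJ
    ((Nat.mul_le_mul (by norm_num)
      (Nat.mul_le_mul_left n (Nat.le_mul_of_pos_left _ hK0))).trans hnS)
  have hzero₁ : VanishesOnGrid p (α / conj α) n k (K * (4 * K ^ 2 * Y)) :=
    hzero.mul_left htr hnm hα hγ hακ hn hk hY hK hnY hε hp le_rfl hS0
  have hS1 : K * (4 * K ^ 2 * Y) = 4 * K ^ 3 * Y := by ring
  rw [hS1] at hzero₁
  have hzero₂ : VanishesOnGrid p (α / conj α) n k (K * (4 * K ^ 3 * Y)) :=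
    hzero₁.mul_left htr hnm hα hγ hακ hn hk hY hK hnY hε hp hS0 le_rfl
  have hI : K ^ 4 * Y ≤ K * (4 * K ^ 3 * Y) := by linarith [Nat.zero_le (K ^ 4 * Y)]
  have hJ : 64 * Y ≤ K * (4 * K ^ 3 * Y) :=
    calc 64 * Y ≤ K ^ 1 * Y := by rw [pow_one]; gcongr
      _ ≤ K ^ 4 * Y := by gcongr; omega
      _ ≤ K * (4 * K ^ 3 * Y) := hI
  exact hp0 (hzero₂.eq_zero hn hI hJ (div_ne_zero hα ((map_ne_zero _).mpr hα)) hγ)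

end RootOfUnityApproximation

lemma exists_norm_sub_expDiv_le {γ : ℂ} (hγ : ‖γ‖ = 1) {n : ℕ} (hn : n ≠ 0) :
    ∃ k ≤ n, ‖γ - expDiv n k‖ ≤ 2 * ‖γ ^ n - 1‖ := by
  have hnorm : ‖γ ^ n‖ = 1 := by rw [norm_pow, hγ, one_pow]
  have hne : γ ^ n ≠ 0 := norm_ne_zero_iff.mp (hnorm ▸ one_ne_zero)
  have : NeZero n := ⟨hn⟩
  have hnℂ : (n : ℂ) ≠ 0 := Nat.cast_ne_zero.mpr hn
  set y : ℝ := -((γ ^ n).arg / n) with hy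
  have hroot : (γ * exp (I * y)) ^ n = 1 := by
    have harg : exp ((γ ^ n).arg * I) = γ ^ n := by
      simpa [hnorm] using norm_mul_exp_arg_mul_I (γ ^ n)
    have hcancel : n * (I * y) = -((γ ^ n).arg * I) := by rw [hy]; push_cast; field_simp
    rw [mul_pow, ← exp_nat_mul, hcancel, exp_neg, harg, mul_inv_cancel₀ hne]
  obtain ⟨k, hk, hγk⟩ := (isPrimitiveRoot_exp n hn).eq_pow_of_pow_eq_one hroot
  refine ⟨k, hk.le, ?_⟩
  have hω : expDiv n k = γ * exp (I * y) := by
    rw [← hγk, ← exp_nat_mul, expDiv]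
    congr 1
    ring
  calc ‖γ - expDiv n k‖ = ‖exp (I * y) - 1‖ := by
        rw [hω, ← mul_one_sub, norm_mul, hγ, one_mul, norm_sub_rev]
    _ ≤ ‖y‖ := Real.norm_exp_I_mul_ofReal_sub_one_le
    _ ≤ |(γ ^ n).arg| := by
      rw [hy, norm_neg, Real.norm_eq_abs, abs_div, Nat.abs_cast]
      exact div_le_self (abs_nonneg _) (Nat.one_le_cast.mpr (Nat.one_le_iff_ne_zero.mpr hn))
    _ ≤ Real.pi / 2 * ‖γ ^ n - 1‖ := by
      rw [← angle_one_right hne]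
      exact angle_le_mul_norm_sub hnorm norm_one
    _ ≤ 2 * ‖γ ^ n - 1‖ := by gcongr; linarith [Real.pi_le_four]

section GelfondEstimate

variable {α : ℂ} {a q : ℤ}

lemma exists_mul_sq_le_two_pow (A : ℕ) : ∃ c : ℕ, 1 ≤ c ∧ A * c ^ 2 ≤ 2 ^ c := by
  have hlim :=
    (tendsto_pow_const_div_const_pow_of_one_lt 2 (one_lt_two (α := ℝ))).const_mul (A : ℝ)
  rw [mul_zero] at hlim
  obtain ⟨c, hc, hc1⟩ :=
    ((hlim.eventually_le_const one_pos).and (Filter.eventually_ge_atTop 1)).exists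
  refine ⟨c, hc1, ?_⟩
  rw [← mul_div_assoc, div_le_one (by positivity)] at hc
  exact_mod_cast hc

lemma mul_sq_mul_le_two_pow {A c n l : ℕ} (hc : 16 * A * c ^ 2 ≤ 2 ^ c) (hl : l ≠ 0)
    (hn : n ≤ 2 ^ (2 * l)) :
    A * ((c * l) ^ 2 * n) ≤ 2 ^ (c * l) := by
  have hAc : A * c ^ 2 ≤ (A * c ^ 2) ^ l := Nat.le_self_pow hl _
  calc A * ((c * l) ^ 2 * n) = A * c ^ 2 * (l ^ 2 * n) := by ring
    _ ≤ (A * c ^ 2) ^ l * ((2 ^ l) ^ 2 * 2 ^ (2 * l)) := by gcongr; exact l.lt_two_pow_self.le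
    _ = (16 * A * c ^ 2) ^ l := by
      rw [mul_assoc 16, mul_pow 16, ← pow_mul, ← pow_add, (by norm_num : 16 = 2 ^ 4), ← pow_mul]
      ring_nf
    _ ≤ (2 ^ c) ^ l := by gcongr
    _ = 2 ^ (c * l) := by rw [pow_mul]

lemma natLog_two_le_two_mul_log (n : ℕ) : (Nat.log 2 n : ℝ) ≤ 2 * Real.log n := by
  have h := Real.natLog_le_logb n 2
  rw [Real.logb, le_div_iff₀ (Real.log_pos (by norm_num))] at h
  push_cast at h
  nlinarith [Real.log_two_gt_d9]

lemma exp_neg_natCast_le_half_pow (m : ℕ) : Real.exp (-m) ≤ (1 / 2) ^ m := by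
  rw [← mul_neg_one, Real.exp_nat_mul]
  gcongr
  linarith [Real.exp_neg_one_lt_d9]

lemma exists_exp_neg_log_pow_three_lt_norm_pow_sub_one (htr : α + conj α = a)
    (hnm : α * conj α = q) (hα : α ≠ 0) (hγ : ¬IsOfFinOrder (α / conj α)) :
    ∃ C : ℝ, ∀ n : ℕ, 2 ≤ n → Real.exp (-(C * Real.log n ^ 3)) < ‖(α / conj α) ^ n - 1‖ := by
  obtain ⟨κ, hκ⟩ : ∃ κ : ℕ, q + |a| ≤ 2 ^ κ :=
    pow_unbounded_of_one_lt (q + |a|) one_lt_two |>.imp fun _ ↦ le_of_lt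
  obtain ⟨K, hK⟩ : ∃ K : ℕ, K = 16 * (κ + 288) := ⟨_, rfl⟩
  obtain ⟨c, hc1, hc⟩ := exists_mul_sq_le_two_pow (16 * (320 * K ^ 4))
  set D := 80 * (K ^ 6 * c ^ 3)
  refine ⟨8 * (D + 1), fun n hn ↦ ?_⟩
  have hn0 : n ≠ 0 := by omega
  set l := Nat.log 2 n
  have hl : 1 ≤ l := Nat.log_pos one_lt_two hn
  have hnl : n ≤ 2 ^ (2 * l) :=
    (Nat.lt_pow_succ_log_self one_lt_two n).le.trans (Nat.pow_le_pow_right two_pos (by omega))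
  obtain ⟨k, hk, hkγ⟩ := exists_norm_sub_expDiv_le (norm_div_conj hα) hn0
  have hdist := (half_pow_lt_norm_div_conj_sub_expDiv htr hnm hα hγ hκ hn0 hk
    (Nat.mul_pos hc1 hl) hK (by
      have := mul_sq_mul_le_two_pow hc (Nat.one_le_iff_ne_zero.mp hl) hnl
      linarith)).trans_le hkγ
  have hexponent : (D * l ^ 3 + 1 : ℝ) ≤ 8 * (D + 1) * Real.log n ^ 3 := by
    have hl1 : (1 : ℝ) ≤ l ^ 3 := one_le_pow₀ (by exact_mod_cast hl)
    calc (D * l ^ 3 + 1 : ℝ) ≤ (D + 1) * l ^ 3 := by linarith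
      _ ≤ (D + 1) * (2 * Real.log n) ^ 3 := by gcongr; exact natLog_two_le_two_mul_log n
      _ = 8 * (D + 1) * Real.log n ^ 3 := by ring
  calc Real.exp (-(8 * (D + 1) * Real.log n ^ 3)) ≤ Real.exp (-(D * l ^ 3 + 1 : ℕ)) := by
        gcongr; exact_mod_cast hexponent
    _ ≤ (1 / 2) ^ (D * l ^ 3 + 1) := exp_neg_natCast_le_half_pow _
    _ < ‖(α / conj α) ^ n - 1‖ := by
      have : D * l ^ 3 = 80 * (K ^ 6 * (c * l) ^ 3) := by ring
      rw [this, pow_succ]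
      linarith

lemma tendsto_pow_mul_norm_pow_sub_one (htr : α + conj α = a)
    (hnm : α * conj α = q) (hα : α ≠ 0) (hγ : ¬IsOfFinOrder (α / conj α)) {r : ℝ} (hr : 1 < r) :
    Filter.Tendsto (fun n : ℕ ↦ r ^ n * ‖(α / conj α) ^ n - 1‖) Filter.atTop Filter.atTop := by
  obtain ⟨C, hC⟩ := exists_exp_neg_log_pow_three_lt_norm_pow_sub_one htr hnm hα hγ
  have hlog : 0 < Real.log r := Real.log_pos hr
  have hsmall : ∀ᶠ n : ℕ in Filter.atTop, C * Real.log n ^ 3 ≤ Real.log r / 2 * n := by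
    have := ((Real.isLittleO_pow_log_id_atTop (n := 3)).const_mul_left C).comp_tendsto
      tendsto_natCast_atTop_atTop
    filter_upwards [this.bound (half_pos hlog)] with n hn
    refine (Real.le_norm_self _).trans (by simpa using hn)
  refine Filter.tendsto_atTop_mono' _ ?_
    (Real.tendsto_exp_atTop.comp
      (tendsto_natCast_atTop_atTop.const_mul_atTop (half_pos hlog)))
  filter_upwards [hsmall, Filter.eventually_ge_atTop 2] with n hn hn2
  calc Real.exp (Real.log r / 2 * n)
      ≤ Real.exp (Real.log r * n) * Real.exp (-(C * Real.log n ^ 3)) := by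
        rw [← Real.exp_add]; gcongr; linarith
    _ = r ^ n * Real.exp (-(C * Real.log n ^ 3)) := by
      rw [mul_comm, mul_comm (Real.log r), Real.exp_nat_mul, Real.exp_log (by linarith), mul_comm]
    _ ≤ r ^ n * ‖(α / conj α) ^ n - 1‖ := by gcongr; exact (hC n hn2).le

lemma finite_setOf_norm_pow_mul_sq_lt (htr : α + conj α = a) (hnm : α * conj α = q)
    (hα : 1 < ‖α‖) (hγ : ¬IsOfFinOrder (α / conj α)) (B : ℝ) :
    {n : ℕ | ‖α‖ ^ n * ‖(α / conj α) ^ n - 1‖ ^ 2 < B}.Finite := by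
  have hα0 : α ≠ 0 := norm_pos_iff.mp (one_pos.trans hα)
  have hr : 1 < Real.sqrt ‖α‖ := Real.lt_sqrt_of_sq_lt (by rwa [one_pow])
  have hlarge := ((Filter.tendsto_pow_atTop two_ne_zero).comp
    (tendsto_pow_mul_norm_pow_sub_one htr hnm hα0 hγ hr)).eventually_ge_atTop B
  rw [← Nat.cofinite_eq_atTop, Filter.eventually_cofinite] at hlarge
  refine hlarge.subset fun n hn ↦ not_le.mpr ?_
  rwa [Function.comp_apply, mul_pow, pow_right_comm, Real.sq_sqrt (norm_nonneg α)]

end GelfondEstimate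

lemma add_conj_eq_and_mul_conj_eq_of_root {z : ℂ} {b c : ℝ} (hz : z ^ 2 - b * z + c = 0)
    (hbc : b ^ 2 ≤ 4 * c) : z + conj z = b ∧ z * conj z = c := by
  have hre : z.re ^ 2 - z.im ^ 2 - b * z.re + c = 0 := by
    simpa [sq] using congrArg re hz
  have him : z.im * (2 * z.re - b) = 0 := by
    have := congrArg im hz
    simp only [sq, add_im, sub_im, mul_im, ofReal_re, ofReal_im, zero_mul, add_zero,
      zero_im] at this
    linarith
  have hb : 2 * z.re = b := by
    rcases mul_eq_zero.mp him with him | hb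
    · rw [him] at hre
      nlinarith [sq_nonneg (2 * z.re - b)]
    · linarith
  have hc : normSq z = c := by
    rw [normSq_apply]
    linear_combination -hre + z.re * hb
  exact ⟨by rw [add_conj, hb], by rw [mul_conj, hc]⟩

lemma norm_mul_norm_div_conj_sub_one_sq_le (z : ℂ) :
    ‖z‖ * ‖z / conj z - 1‖ ^ 2 ≤ 8 * (‖z‖ + z.re) := by
  rcases eq_or_ne z 0 with rfl | hz
  · simp
  have hconj : conj z ≠ 0 := (map_ne_zero _).mpr hz
  have hnorm : 0 < ‖z‖ := norm_pos_iff.mpr hz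
  have him : ‖z / conj z - 1‖ = 2 * |z.im| / ‖z‖ := by
    rw [div_sub_one hconj, sub_conj, norm_div, RCLike.norm_conj]
    simp
  have hpyth : ‖z‖ ^ 2 = z.re ^ 2 + z.im ^ 2 := by rw [Complex.sq_norm, normSq_apply]; ring
  calc ‖z‖ * ‖z / conj z - 1‖ ^ 2 = 4 * ((‖z‖ - z.re) * (‖z‖ + z.re)) / ‖z‖ := by
        rw [him, div_pow, mul_pow, sq_abs]
        field_simp
        linear_combination -4 * hpyth
    _ ≤ 8 * (‖z‖ + z.re) := by
      rw [div_le_iff₀ hnorm]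
      nlinarith [neg_le_of_abs_le (abs_re_le_norm z)]

lemma norm_pow_mul_norm_div_conj_pow_sub_one_sq_lt {α : ℂ} {b : ℤ} {n : ℕ}
    (hb : (b : ℂ) = α ^ n + conj α ^ n) (hfloor : -b = ⌊2 * ‖α‖ ^ n⌋) :
    ‖α‖ ^ n * ‖(α / conj α) ^ n - 1‖ ^ 2 < 4 := by
  have hre : 2 * (α ^ n).re = b := by
    rw [← map_pow, add_conj] at hb
    exact_mod_cast hb.symm
  have hlt : 2 * ‖α‖ ^ n < -b + 1 := by
    exact_mod_cast hfloor ▸ Int.lt_floor_add_one (2 * ‖α‖ ^ n)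
  have hle := norm_mul_norm_div_conj_sub_one_sq_le (α ^ n)
  rw [map_pow, ← div_pow, norm_pow] at hle
  linarith

/-- For an ordinary pair `(q, a₁)` (i.e. `β` not a root of unity), the set of
positive integers `n` with `−aₙ = ⌊2·q^{n/2}⌋` is finite. -/
theorem ordinary_finitely_many_maximal (q a1 : ℤ) (hq : 2 ≤ q) (ha1 : a1 ^ 2 ≤ 4 * q)
    (α β : ℂ) (hα : α ^ 2 - a1 * α + q = 0) (him : 0 ≤ α.im)
    (hβ : β = α / (Real.sqrt q : ℂ))
    (hord : ¬ ∃ k : ℕ, 0 < k ∧ β ^ k = 1)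
    (a : ℕ → ℤ) (ha : ∀ n : ℕ, (a n : ℂ) = α ^ n + (starRingEnd ℂ) α ^ n) :
    {n : ℕ | 0 < n ∧ -(a n) = ⌊2 * Real.sqrt q ^ n⌋}.Finite := by
  obtain ⟨htr, hnm⟩ := add_conj_eq_and_mul_conj_eq_of_root (b := a1) (c := q)
    (by exact_mod_cast hα) (by exact_mod_cast ha1)
  have hnorm : Real.sqrt q = ‖α‖ := by
    rw [mul_conj, normSq_eq_norm_sq, ofReal_inj] at hnm
    rw [← hnm, Real.sqrt_sq (norm_nonneg α)]
  have hα1 : 1 < ‖α‖ := hnorm ▸ Real.lt_sqrt_of_sq_lt (by rw [one_pow]; exact_mod_cast hq)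
  have hβfin : ¬IsOfFinOrder β := by simpa only [isOfFinOrder_iff_pow_eq_one] using hord
  have hγ : ¬IsOfFinOrder (α / conj α) := by
    rw [div_conj_eq_div_norm_sq (norm_pos_iff.mp (one_pos.trans hα1)), ← hnorm, ← hβ]
    exact fun h ↦ hβfin (h.of_pow two_ne_zero)
  refine (finite_setOf_norm_pow_mul_sq_lt (by exact_mod_cast htr) (by exact_mod_cast hnm) hα1 hγ
    4).subset fun n ⟨_, hn⟩ ↦ ?_
  exact norm_pow_mul_norm_div_conj_pow_sub_one_sq_lt (ha n) (hnorm ▸ hn)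
end

section
/- Let q, a₁ be integers with q ≥ 2 and a₁² ≤ 4q, write a₁ = 2·√q·cos(θ) with θ ∈ [0, π], and let N be a positive integer and x a real number with |x − θ/π| ≤ (1/(2N²))·(1 − (2/3)·13·2^{−13/4}) if q = 2, and |x − θ/π| ≤ (1/(2N²))·(1 − (2/3)·3·q^{−3/4}) if q ≥ 3. If −aₙ = ⌊2·q^{n/2}⌋ for some odd integer n with 3 ≤ n ≤ N, and moreover q ≥ 3 or n ≥ 13, then there exists an odd integer m such that m/n is a convergent of the continued fraction expansion of x. -/
/-!
Dividing `2√qⁿ - 1 < -2 Re αⁿ = -2√qⁿ cos (nθ)` by `√qⁿ` shows that `2 (1 + cos (nθ)) < s²` with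
`s = q^(-n/4)`. As `2 (1 - cos (πs/3)) = (2 sin (πs/6))² ≥ s²` by concavity of the sine, `nθ` is
within `πs/3` of an odd multiple `mπ`, that is, `θ/π` is within `s/(3n) = (2/3) n s / (2n²)` of
`m/n`. By Bernoulli's inequality `n q^(-n/4)` is at most its value at the threshold `13` (`q = 2`)
or `3` (`q ≥ 3`), so `|x - m/n| < 1/(2n²)` and Legendre's theorem applies.
-/

open Real

lemma mul_sin_le_sin_mul {s u : ℝ} (hs₀ : 0 ≤ s) (hs₁ : s ≤ 1) (hu₀ : 0 ≤ u) (hu : u ≤ π) :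
    s * sin u ≤ sin (s * u) := by
  simpa using strictConcaveOn_sin_Icc.concaveOn.2 ⟨le_rfl, pi_pos.le⟩ ⟨hu₀, hu⟩
    (sub_nonneg.2 hs₁) hs₀ (sub_add_cancel 1 s)

lemma sq_le_two_mul_one_sub_cos {s : ℝ} (hs₀ : 0 ≤ s) (hs₁ : s ≤ 1) :
    s ^ 2 ≤ 2 * (1 - cos (π / 3 * s)) := by
  have hsin : s * (1 / 2) ≤ sin (s * (π / 6)) := by
    simpa only [sin_pi_div_six] using
      mul_sin_le_sin_mul hs₀ hs₁ (u := π / 6) (by positivity) (by linarith [pi_pos])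
  calc s ^ 2 = 4 * (s * (1 / 2)) ^ 2 := by ring
    _ ≤ 4 * sin (s * (π / 6)) ^ 2 := by gcongr
    _ = 2 * (1 - cos (2 * (s * (π / 6)))) := by rw [cos_two_mul, cos_sq']; ring
    _ = 2 * (1 - cos (π / 3 * s)) := by ring_nf

lemma abs_lt_of_two_mul_one_sub_cos_lt_sq {s u : ℝ} (hs₀ : 0 ≤ s) (hs₁ : s ≤ 1) (hu : |u| ≤ π)
    (h : 2 * (1 - cos u) < s ^ 2) : |u| < π / 3 * s := by
  by_contra! hle
  have hcos : cos u ≤ cos (π / 3 * s) := by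
    simpa only [cos_abs] using cos_le_cos_of_nonneg_of_le_pi (by positivity) hu hle
  linarith [sq_le_two_mul_one_sub_cos hs₀ hs₁]

lemma exists_odd_abs_sub_mul_pi_le (y : ℝ) : ∃ m : ℤ, Odd m ∧ |y - m * π| ≤ π := by
  obtain ⟨k, ⟨hk₀, hk₁⟩, -⟩ := existsUnique_sub_zsmul_mem_Ico two_pi_pos y 0
  rw [zsmul_eq_mul] at hk₀ hk₁
  refine ⟨2 * k + 1, odd_two_mul_add_one k, abs_le.2 ⟨?_, ?_⟩⟩ <;> push_cast <;> linarith

lemma cos_sub_odd_mul_pi (y : ℝ) {m : ℤ} (hm : Odd m) : cos (y - m * π) = -cos y := by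
  rw [cos_sub_int_mul_pi, hm.neg_one_zpow, neg_one_mul]

lemma exists_odd_abs_sub_mul_pi_lt {s y : ℝ} (hs₀ : 0 ≤ s) (hs₁ : s ≤ 1)
    (h : 2 * (1 + cos y) < s ^ 2) : ∃ m : ℤ, Odd m ∧ |y - m * π| < π / 3 * s := by
  obtain ⟨m, hm, hle⟩ := exists_odd_abs_sub_mul_pi_le y
  refine ⟨m, hm, abs_lt_of_two_mul_one_sub_cos_lt_sq hs₀ hs₁ hle ?_⟩
  rwa [cos_sub_odd_mul_pi y hm, sub_neg_eq_add]

lemma exists_odd_abs_div_pi_sub_div_lt {s θ : ℝ} {n : ℕ} (hn : 0 < n) (hs₀ : 0 ≤ s) (hs₁ : s ≤ 1)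
    (h : 2 * (1 + cos (n * θ)) < s ^ 2) : ∃ m : ℤ, Odd m ∧ |θ / π - m / n| < s / (3 * n) := by
  obtain ⟨m, hm, hlt⟩ := exists_odd_abs_sub_mul_pi_lt hs₀ hs₁ h
  have hnπ : 0 < n * π := by positivity
  refine ⟨m, hm, ?_⟩
  calc |θ / π - m / n| = |(n * θ - m * π) / (n * π)| := by field_simp
    _ = |n * θ - m * π| / (n * π) := by rw [abs_div, abs_of_pos hnπ]
    _ < π / 3 * s / (n * π) := by gcongr
    _ = s / (3 * n) := by field_simp

lemma eq_mul_exp_or_eq_mul_exp_neg {r z α : ℂ}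
    (hα : α ^ 2 - 2 * r * Complex.cos z * α + r ^ 2 = 0) :
    α = r * Complex.exp (z * Complex.I) ∨ α = r * Complex.exp (-z * Complex.I) := by
  have hexp : Complex.exp (z * Complex.I) * Complex.exp (-z * Complex.I) = 1 := by
    rw [← Complex.exp_add, neg_mul, add_neg_cancel, Complex.exp_zero]
  have hfactor :
      (α - r * Complex.exp (z * Complex.I)) * (α - r * Complex.exp (-z * Complex.I)) = 0 := by
    rw [← hα, Complex.cos]
    linear_combination r ^ 2 * hexp
  simpa only [mul_eq_zero, sub_eq_zero] using hfactor

lemma re_mul_exp_pow (r θ : ℝ) (n : ℕ) :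
    (((r : ℂ) * Complex.exp (θ * Complex.I)) ^ n).re = r ^ n * cos (n * θ) := by
  rw [mul_pow, ← Complex.exp_nat_mul, ← mul_assoc, ← Complex.ofReal_pow, Complex.re_ofReal_mul,
    ← Complex.ofReal_natCast, ← Complex.ofReal_mul, Complex.exp_ofReal_mul_I_re]

lemma re_pow_eq_pow_mul_cos {r θ : ℝ} {α : ℂ}
    (hα : α ^ 2 - (2 * r * cos θ : ℝ) * α + (r ^ 2 : ℝ) = 0) (n : ℕ) :
    (α ^ n).re = r ^ n * cos (n * θ) := by
  push_cast at hα
  rcases eq_mul_exp_or_eq_mul_exp_neg hα with rfl | rfl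
  · exact re_mul_exp_pow r θ n
  · rw [← Complex.ofReal_neg, re_mul_exp_pow, mul_neg, cos_neg]

lemma rpow_neg_div_four_sq_mul_sqrt_pow {q : ℝ} (hq : 0 < q) (n : ℕ) :
    (q ^ (-(n : ℝ) / 4)) ^ 2 * √q ^ n = 1 := by
  rw [sqrt_eq_rpow, ← rpow_mul_natCast hq.le, ← rpow_mul_natCast hq.le, ← rpow_add hq]
  convert rpow_zero q using 2
  push_cast
  ring

lemma mul_rpow_neg_div_four_le {q n₀ n : ℝ} (hn₀ : 0 < n₀) (hq : n₀ + 2 ≤ √q * n₀)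
    (hn : n₀ + 2 ≤ n) : n * q ^ (-n / 4) ≤ n₀ * q ^ (-n₀ / 4) := by
  have hbase : 1 + 2 / n₀ ≤ √q := by rwa [one_add_div hn₀.ne', div_le_iff₀ hn₀]
  have hq₀ : 0 < q := sqrt_pos.1 (lt_of_lt_of_le (by positivity) hbase)
  have hbernoulli : 1 + (n - n₀) / 2 * (2 / n₀) ≤ √q ^ ((n - n₀) / 2) :=
    (one_add_mul_self_le_rpow_one_add (by linarith [show 0 < 2 / n₀ by positivity])
      (by linarith)).trans (rpow_le_rpow (by positivity) hbase (by linarith))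
  calc n * q ^ (-n / 4) = n₀ * (1 + (n - n₀) / 2 * (2 / n₀)) * q ^ (-n / 4) := by
        congr 1
        field_simp
        ring
    _ ≤ n₀ * √q ^ ((n - n₀) / 2) * q ^ (-n / 4) := by gcongr
    _ = n₀ * q ^ (-n₀ / 4) := by
        rw [sqrt_eq_rpow, ← rpow_mul hq₀.le, mul_assoc, ← rpow_add hq₀]
        ring_nf

/- `m / n` need not be in lowest terms, but reducing it only weakens the bound required by
Legendre's theorem. -/
lemma exists_convs_eq_div_of_abs_sub_lt {x : ℝ} {m : ℤ} {n : ℕ} (hn : 0 < n)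
    (h : |x - m / n| < 1 / (2 * (n : ℝ) ^ 2)) :
    ∃ k : ℕ, (GenContFract.of x).convs k = (m : ℝ) / (n : ℝ) := by
  have hden : (m / n : ℚ).den ≤ n := by
    refine Nat.le_of_dvd hn (Int.natCast_dvd_natCast.1 ?_)
    simpa only [Rat.divInt_eq_div, Int.cast_natCast] using Rat.den_dvd m n
  have hlegendre : |x - (m / n : ℚ)| < 1 / (2 * ((m / n : ℚ).den : ℝ) ^ 2) := by
    calc |x - (m / n : ℚ)| = |x - m / n| := by push_cast; rfl
      _ < 1 / (2 * (n : ℝ) ^ 2) := h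
      _ ≤ 1 / (2 * ((m / n : ℚ).den : ℝ) ^ 2) := by gcongr
  obtain ⟨k, hk⟩ := Real.exists_convs_eq_rat hlegendre
  exact ⟨k, by rw [hk]; push_cast; rfl⟩

lemma exists_odd_abs_div_pi_sub_div_lt_of_re_pow {q θ : ℝ} {α : ℂ} {n : ℕ} (hq : 1 ≤ q) (hn : 0 < n)
    (hα : α ^ 2 - (2 * √q * cos θ : ℝ) * α + q = 0)
    (hmax : 2 * √q ^ n - 1 < -(2 * (α ^ n).re)) :
    ∃ m : ℤ, Odd m ∧ |θ / π - m / n| < q ^ (-(n : ℝ) / 4) / (3 * n) := by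
  have hq₀ : 0 < q := by linarith
  have hroot : α ^ 2 - (2 * √q * cos θ : ℝ) * α + (√q ^ 2 : ℝ) = 0 := by rwa [sq_sqrt hq₀.le]
  rw [re_pow_eq_pow_mul_cos hroot] at hmax
  refine exists_odd_abs_div_pi_sub_div_lt hn (by positivity)
    (rpow_le_one_of_one_le_of_nonpos hq (by linarith [n.cast_nonneg (α := ℝ)])) ?_
  have hpow : 0 < √q ^ n := by positivity
  refine lt_of_mul_lt_mul_right ?_ hpow.le
  rw [rpow_neg_div_four_sq_mul_sqrt_pow hq₀]
  linarith

theorem convergent_of_maximal_general {q θ x n₀ : ℝ} {α : ℂ} {n N : ℕ}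
    (hα : α ^ 2 - (2 * √q * cos θ : ℝ) * α + q = 0)
    (hn₀ : 0 < n₀) (hq : n₀ + 2 ≤ √q * n₀) (hn : n = n₀ ∨ n₀ + 2 ≤ n) (hnN : n ≤ N)
    (hx : |x - θ / π| ≤ 1 / (2 * (N : ℝ) ^ 2) * (1 - 2 / 3 * n₀ * q ^ (-n₀ / 4)))
    (hmax : 2 * √q ^ n - 1 < -(2 * (α ^ n).re)) :
    ∃ m : ℤ, Odd m ∧ ∃ k : ℕ, (GenContFract.of x).convs k = (m : ℝ) / (n : ℝ) := by
  have hn_pos : 0 < n := by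
    rw [← Nat.cast_pos (α := ℝ)]
    rcases hn with hn | hn <;> linarith
  have hq₁ : 1 ≤ q := one_le_sqrt.1 (le_of_mul_le_mul_right (by linarith) hn₀)
  have hdecay : n * q ^ (-(n : ℝ) / 4) ≤ n₀ * q ^ (-n₀ / 4) := by
    rcases hn with hn | hn
    · rw [hn]
    · exact mul_rpow_neg_div_four_le hn₀ hq hn
  obtain ⟨m, hm, hθ⟩ := exists_odd_abs_div_pi_sub_div_lt_of_re_pow hq₁ hn_pos hα hmax
  refine ⟨m, hm, exists_convs_eq_div_of_abs_sub_lt hn_pos ?_⟩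
  have hroom : 0 ≤ 1 - 2 / 3 * n₀ * q ^ (-n₀ / 4) := by
    have hN : 0 < N := hn_pos.trans_le hnN
    exact nonneg_of_mul_nonneg_right ((abs_nonneg _).trans hx) (by positivity)
  calc |x - m / n| ≤ |x - θ / π| + |θ / π - m / n| := abs_sub_le _ _ _
    _ < 1 / (2 * (N : ℝ) ^ 2) * (1 - 2 / 3 * n₀ * q ^ (-n₀ / 4))
        + q ^ (-(n : ℝ) / 4) / (3 * n) := add_lt_add_of_le_of_lt hx hθ
    _ ≤ 1 / (2 * (n : ℝ) ^ 2) * (1 - 2 / 3 * n₀ * q ^ (-n₀ / 4))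
        + q ^ (-(n : ℝ) / 4) / (3 * n) := by gcongr
    _ = 1 / (2 * (n : ℝ) ^ 2) *
        (1 - 2 / 3 * (n₀ * q ^ (-n₀ / 4) - n * q ^ (-(n : ℝ) / 4))) := by field_simp; ring
    _ ≤ 1 / (2 * (n : ℝ) ^ 2) := mul_le_of_le_one_right (by positivity) (by linarith)

/-- With `a₁ = 2√q·cos θ`, `θ ∈ [0, π]`, if `x` approximates `θ/π` well
enough (depending on `N` and `q`) and `−aₙ = ⌊2·q^{n/2}⌋` for some odd `3 ≤ n ≤ N` with
`q ≥ 3` or `n ≥ 13`, then `m/n` is a convergent of `x` for some odd integer `m`. -/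
theorem convergent_of_maximal (q a1 : ℤ) (hq : 2 ≤ q) (ha1 : a1 ^ 2 ≤ 4 * q)
    (α : ℂ) (hα : α ^ 2 - a1 * α + q = 0) (him : 0 ≤ α.im)
    (a : ℕ → ℤ) (ha : ∀ k : ℕ, (a k : ℂ) = α ^ k + (starRingEnd ℂ) α ^ k)
    (θ : ℝ) (hθ0 : 0 ≤ θ) (hθπ : θ ≤ Real.pi)
    (hcos : (a1 : ℝ) = 2 * Real.sqrt q * Real.cos θ)
    (N : ℕ) (hN : 0 < N) (x : ℝ)
    (hx2 : q = 2 →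
      |x - θ / Real.pi| ≤ 1 / (2 * (N : ℝ) ^ 2) * (1 - 2 / 3 * 13 * (2 : ℝ) ^ (-(13 : ℝ) / 4)))
    (hx3 : 3 ≤ q →
      |x - θ / Real.pi| ≤ 1 / (2 * (N : ℝ) ^ 2) * (1 - 2 / 3 * 3 * (q : ℝ) ^ (-(3 : ℝ) / 4)))
    (n : ℕ) (hodd : Odd n) (hn3 : 3 ≤ n) (hnN : n ≤ N)
    (hmax : -(a n) = ⌊2 * Real.sqrt q ^ n⌋)
    (hqn : 3 ≤ q ∨ 13 ≤ n) :
    ∃ m : ℤ, Odd m ∧ ∃ k : ℕ, (GenContFract.of x).convs k = (m : ℝ) / (n : ℝ) := by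
  have hroot : α ^ 2 - (2 * √q * cos θ : ℝ) * α + (q : ℝ) = 0 := by
    rw [← hcos]
    exact_mod_cast hα
  have htrace : (a n : ℝ) = 2 * (α ^ n).re := by
    rw [← Complex.ofReal_inj, ← Complex.add_conj, map_pow]
    exact_mod_cast ha n
  have hlt : 2 * √q ^ n - 1 < -(2 * (α ^ n).re) := by
    rw [← htrace]
    exact_mod_cast hmax ▸ Int.sub_one_lt_floor (2 * √(q : ℝ) ^ n)
  have hgap {n₀ : ℕ} (hn₀ : Odd n₀) (hle : n₀ ≤ n) : (n : ℝ) = n₀ ∨ (n₀ : ℝ) + 2 ≤ n := by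
    norm_cast
    grind
  rcases hq.eq_or_lt with rfl | hq3
  · rw [Int.cast_ofNat] at hroot hlt
    have hsqrt : (15 / 13 : ℝ) ≤ √2 := le_sqrt_of_sq_le (by norm_num)
    exact convergent_of_maximal_general hroot (n₀ := 13) (by norm_num) (by linarith)
      (by exact_mod_cast hgap (n₀ := 13) (by decide) (by omega)) hnN (hx2 rfl) hlt
  · have hsqrt : (5 / 3 : ℝ) ≤ √q :=
      le_sqrt_of_sq_le (by norm_num; linarith [show (3 : ℝ) ≤ q by exact_mod_cast hq3])
    exact convergent_of_maximal_general hroot (n₀ := 3) (by norm_num) (by linarith)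
      (by exact_mod_cast hgap (n₀ := 3) (by decide) hn3) hnN (hx3 hq3) hlt
end
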